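/- Fix an integer d ≥ 4 and set β = d/2 − 2. For every real a > 0 there exist a constant c > 0 and an integer N such that for all n ≥ N: Var(f₀(Qₙ)) ≥ c·n^{1/(d−1) − a}, where Qₙ is the convex hull of n i.i.d. points with law μ_β and f₀(Qₙ) is its number of extreme points. -/

import Mathlib

open MeasureTheory

/-- The `β`-distribution on the closed unit disk of `ℝ²`. -/
noncomputable def betaMeasure (β : ℝ) : Measure (EuclideanSpace ℝ (Fin 2)) :=
  volume.withDensity fun x =>
    ENNReal.ofReal (if ‖x‖ ≤ 1 then (β + 1) / Real.pi * (1 - ‖x‖ ^ 2) ^ β else 0)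

instance (β : ℝ) : SigmaFinite (betaMeasure β) :=
  SigmaFinite.withDensity_ofReal _

/-- The joint law of `n` i.i.d. points with law `μ_β`, realized on `(ℝ²)ⁿ`. -/
noncomputable def betaPi (β : ℝ) (n : ℕ) :
    Measure (Fin n → EuclideanSpace ℝ (Fin 2)) :=
  Measure.pi fun _ => betaMeasure β

/-- The number of vertices (extreme points) of the convex hull `Qₙ`, as a real. -/
noncomputable def vertCount {n : ℕ} (ω : Fin n → EuclideanSpace ℝ (Fin 2)) : ℝ :=
  Nat.card (Set.extremePoints ℝ (convexHull ℝ (Set.range ω)))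

/-- `E[f₀(Qₙ)]`. -/
noncomputable def meanF0 (β : ℝ) (n : ℕ) : ℝ :=
  ∫ ω, vertCount ω ∂ betaPi β n

/-- `Var(f₀(Qₙ)) = E[f₀(Qₙ)²] - (E[f₀(Qₙ)])²`. -/
noncomputable def varF0 (β : ℝ) (n : ℕ) : ℝ :=
  (∫ ω, vertCount ω ^ 2 ∂ betaPi β n) - meanF0 β n ^ 2

/-!
Magnify the cap of width `w` and depth `w²` around a point of the unit circle, so that the circle
becomes nearly the parabola `u² = 2v`. Suppose that each of four fixed small cells of the magnified
cap contains one sample point while all other sample points are far away from the cap. Two of the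
four points act as pillars: which of the remaining far points are vertices of the hull does not
depend on the positions of the last two. Of these, the movable one is always a vertex, and the other
one is a vertex unless it is covered by the movable one. Reflecting the movable point in the axis of
the cap covers it, which changes the number of vertices by exactly one.

For `w` of order `n^{-1/(2β+3)}` a cap has mass of order `1/n`, so that this event has probability
bounded away from zero, and there is room for order `1/w` well separated caps. The reflections in
different caps commute and preserve the law of the sample, so the parts of the vertex count that are
odd under them are pairwise uncorrelated, and by Bessel's inequality their variances add up to a
lower bound of order `1/w` for the variance of the vertex count. Here `2β + 3 = d - 1`.
-/

section Variance

open ProbabilityTheory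

variable {Ω : Type*} {mΩ : MeasurableSpace Ω} {μ : Measure Ω}

lemma covariance_eq_zero_of_comp_eq_neg {T : Ω → Ω} (hT : MeasurePreserving T μ μ) {X Y : Ω → ℝ}
    (hX : AEStronglyMeasurable X μ) (hY : AEStronglyMeasurable Y μ) (hXT : X ∘ T = -X)
    (hYT : Y ∘ T = Y) : cov[X, Y; μ] = 0 := by
  have hcov : cov[X, Y; μ] = -cov[X, Y; μ] :=
    calc cov[X, Y; μ] = cov[X ∘ T, Y ∘ T; μ] := by
          conv_lhs => rw [← hT.map_eq]
          exact covariance_map (by rwa [hT.map_eq]) (by rwa [hT.map_eq]) hT.aemeasurable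
      _ = -cov[X, Y; μ] := by rw [hXT, hYT, covariance_neg_left]
  linarith

lemma sq_mul_sum_variance_le_variance [IsFiniteMeasure μ] {ι : Type*} [Fintype ι] {f : Ω → ℝ}
    {X : ι → Ω → ℝ} (hf : MemLp f 2 μ) (hX : ∀ i, MemLp (X i) 2 μ)
    (hXX : Pairwise fun i j ↦ cov[X i, X j; μ] = 0) {c : ℝ}
    (hfX : ∀ i, cov[f, X i; μ] = c * Var[X i; μ]) :
    c ^ 2 * ∑ i, Var[X i; μ] ≤ Var[f; μ] := by
  classical
  have hS : Var[∑ i, X i; μ] = ∑ i, Var[X i; μ] := by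
    rw [variance_sum hX]
    refine Finset.sum_congr rfl fun i _ ↦ ?_
    rw [Finset.sum_eq_single i (fun j _ hji ↦ hXX hji.symm) (by simp),
      covariance_self (hX i).aemeasurable]
  have hfS : cov[f, c • ∑ i, X i; μ] = c ^ 2 * ∑ i, Var[X i; μ] := by
    rw [covariance_smul_right, covariance_sum_right hX hf, Finset.sum_congr rfl fun i _ ↦ hfX i,
      ← Finset.mul_sum]
    ring
  have hcS : MemLp (c • ∑ i, X i) 2 μ := (memLp_finsetSum' _ fun i _ ↦ hX i).const_smul c
  have hvar := variance_nonneg (f - c • ∑ i, X i) μ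
  rw [variance_sub hf hcS, hfS, variance_smul, hS] at hvar
  linarith

/-- The `{-1, 0, 1}`-valued function `1_E - 1_{T⁻¹ E}`, odd under `T` when `T` is an involution. -/
noncomputable def flipSign (T : Ω → Ω) (E : Set Ω) : Ω → ℝ :=
  E.indicator 1 - (T ⁻¹' E).indicator 1

section flipSign

variable {T : Ω → Ω} {E : Set Ω}

lemma flipSign_comp_self (hT : Function.Involutive T) : flipSign T E ∘ T = -flipSign T E := by
  ext ω
  by_cases h : ω ∈ E <;> by_cases h' : T ω ∈ E <;> simp [flipSign, h, h', hT ω]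

lemma flipSign_comp_of_commute {S : Ω → Ω} (hST : Function.Commute S T) (hE : S ⁻¹' E = E) :
    flipSign T E ∘ S = flipSign T E := by
  have hE' (ω : Ω) : S ω ∈ E ↔ ω ∈ E := Set.ext_iff.1 hE ω
  have hTE (ω : Ω) : T (S ω) ∈ E ↔ T ω ∈ E := by rw [← hST.eq, hE']
  ext ω
  by_cases h : ω ∈ E <;> by_cases h' : T ω ∈ E <;> simp [flipSign, h, h', hE', hTE]

lemma memLp_flipSign [IsFiniteMeasure μ] (hT : Measurable T) (hE : MeasurableSet E) :
    MemLp (flipSign T E) 2 μ :=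
  ((memLp_const (1 : ℝ)).indicator hE).sub ((memLp_const (1 : ℝ)).indicator (hT hE))

lemma integral_flipSign [IsFiniteMeasure μ] (hT : MeasurePreserving T μ μ)
    (hE : MeasurableSet E) : ∫ ω, flipSign T E ω ∂μ = 0 := by
  rw [flipSign, integral_sub' ((integrable_const 1).indicator hE)
    ((integrable_const 1).indicator (hT.measurable hE)), integral_indicator_one hE,
    integral_indicator_one (hT.measurable hE), hT.measureReal_preimage hE.nullMeasurableSet,
    sub_self]

lemma variance_flipSign [IsFiniteMeasure μ] (hT : MeasurePreserving T μ μ)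
    (hE : MeasurableSet E) (hdisj : Disjoint E (T ⁻¹' E)) :
    Var[flipSign T E; μ] = 2 * μ.real E := by
  have hsq : flipSign T E ^ 2 = E.indicator 1 + (T ⁻¹' E).indicator 1 := by
    ext ω
    by_cases h : ω ∈ E <;> by_cases h' : T ω ∈ E
    · exact (Set.disjoint_left.1 hdisj h h').elim
    all_goals simp [flipSign, h, h']
  rw [variance_eq_integral (memLp_flipSign hT.measurable hE).aemeasurable, integral_flipSign hT hE]
  simp only [sub_zero]
  calc ∫ ω, flipSign T E ω ^ 2 ∂μ
      = ∫ ω, (E.indicator 1 + (T ⁻¹' E).indicator 1 : Ω → ℝ) ω ∂μ := by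
        simp only [← hsq, Pi.pow_apply]
    _ = 2 * μ.real E := by
      rw [integral_add' ((integrable_const 1).indicator hE)
        ((integrable_const 1).indicator (hT.measurable hE)), integral_indicator_one hE,
        integral_indicator_one (hT.measurable hE), hT.measureReal_preimage hE.nullMeasurableSet]
      ring

-- As `flipSign T E` is odd under `T`, its covariances with `f` and with `-f ∘ T` agree.
lemma covariance_flipSign [IsProbabilityMeasure μ] {f : Ω → ℝ} (hf : MemLp f 2 μ)
    (hT : MeasurePreserving T μ μ) (hinv : Function.Involutive T) (hE : MeasurableSet E)
    (hdisj : Disjoint E (T ⁻¹' E)) (hfE : ∀ ω ∈ E, f ω = f (T ω) + 1) :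
    cov[f, flipSign T E; μ] = 1 / 2 * Var[flipSign T E; μ] := by
  set s := flipSign T E with hs
  have hs2 : MemLp s 2 μ := memLp_flipSign hT.measurable hE
  have hfT : MemLp (f ∘ T) 2 μ := hf.comp_measurePreserving hT
  have hprod : s ^ 2 = (f - f ∘ T) * s := by
    ext ω
    by_cases h : ω ∈ E <;> by_cases h' : T ω ∈ E
    · exact (Set.disjoint_left.1 hdisj h h').elim
    · simp [hs, flipSign, h, h', hfE ω h]
    · have := hfE _ h'
      rw [hinv] at this
      simp [hs, flipSign, h, h', this]
    · simp [hs, flipSign, h, h']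
  have hodd : cov[f ∘ T, s; μ] = -cov[f, s; μ] := by
    have hmap := covariance_map (μ := μ) (Z := T) (X := f ∘ T) (Y := s)
      (by rw [hT.map_eq]; exact hfT.aestronglyMeasurable)
      (by rw [hT.map_eq]; exact hs2.aestronglyMeasurable) hT.aemeasurable
    rw [hT.map_eq, Function.comp_assoc, hinv.comp_self, Function.comp_id, hs,
      flipSign_comp_self hinv, covariance_neg_right] at hmap
    exact hmap
  have hmean : ∫ ω, s ω ∂μ = 0 := integral_flipSign hT hE
  have hvar : Var[s; μ] = cov[f, s; μ] - cov[f ∘ T, s; μ] := by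
    rw [← covariance_sub_left hf hfT hs2, variance_eq_sub hs2, covariance_eq_sub (hf.sub hfT) hs2,
      hmean, hprod]
    ring
  linarith

end flipSign

lemma half_mul_sum_measureReal_le_variance [IsProbabilityMeasure μ] {ι : Type*} [Fintype ι]
    {f : Ω → ℝ} {T : ι → Ω → Ω} {E : ι → Set Ω} (hf : MemLp f 2 μ)
    (hT : ∀ i, MeasurePreserving (T i) μ μ) (hinv : ∀ i, Function.Involutive (T i))
    (hcomm : Pairwise fun i j ↦ Function.Commute (T i) (T j)) (hE : ∀ i, MeasurableSet (E i))
    (hTE : Pairwise fun i j ↦ T i ⁻¹' E j = E j) (hfE : ∀ i, ∀ ω ∈ E i, f ω = f (T i ω) + 1) :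
    1 / 2 * ∑ i, μ.real (E i) ≤ Var[f; μ] := by
  have hdisj (i : ι) : Disjoint (E i) (T i ⁻¹' E i) := by
    refine Set.disjoint_left.2 fun ω h h' ↦ ?_
    have h₁ := hfE i ω h
    have h₂ := hfE i (T i ω) h'
    rw [hinv i ω] at h₂
    linarith
  have hs (i : ι) : MemLp (flipSign (T i) (E i)) 2 μ := memLp_flipSign (hT i).measurable (hE i)
  have huncorr : Pairwise fun i j ↦ cov[flipSign (T i) (E i), flipSign (T j) (E j); μ] = 0 :=
    fun i j hij ↦ covariance_eq_zero_of_comp_eq_neg (hT i) (hs i).aestronglyMeasurable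
      (hs j).aestronglyMeasurable (flipSign_comp_self (hinv i))
      (flipSign_comp_of_commute (hcomm hij) (hTE hij))
  have hbessel := sq_mul_sum_variance_le_variance hf hs huncorr fun i ↦
    covariance_flipSign hf (hT i) (hinv i) (hE i) (hdisj i) (hfE i)
  simp only [variance_flipSign (hT _) (hE _) (hdisj _), ← Finset.mul_sum] at hbessel
  linarith

end Variance

section HullVertices

/-- The vertices of the polytope spanned by `A`: the extreme points of its convex hull. -/
def hullVertices {E : Type*} [AddCommGroup E] [Module ℝ E] (A : Set E) : Set E :=
  (convexHull ℝ A).extremePoints ℝ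

section Module

variable {E F : Type*} [AddCommGroup E] [Module ℝ E] [AddCommGroup F] [Module ℝ F]
  {A B : Set E} {p : E}

lemma hullVertices_subset (A : Set E) : hullVertices A ⊆ A :=
  extremePoints_convexHull_subset

lemma mem_hullVertices_of_subset (hAB : A ⊆ B) (hpA : p ∈ A) (hpB : p ∈ hullVertices B) :
    p ∈ hullVertices A :=
  inter_extremePoints_subset_extremePoints_of_subset (convexHull_mono hAB)
    ⟨subset_convexHull ℝ A hpA, hpB⟩

lemma notMem_convexHull_sdiff_singleton (hp : p ∈ hullVertices A) :
    p ∉ convexHull ℝ (A \ {p}) := fun hmem ↦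
  (hullVertices_subset _ (inter_extremePoints_subset_extremePoints_of_subset
    (convexHull_mono Set.sdiff_subset) ⟨hmem, hp⟩)).2 rfl

lemma mem_hullVertices_of_forall_lt (hp : p ∈ A) (f : E →ₗ[ℝ] ℝ)
    (hf : ∀ q ∈ A, q ≠ p → f q < f p) : p ∈ hullVertices A := by
  have hhalf : Convex ℝ {q | f q < f p} := convex_halfSpace_lt f.isLinear _
  have hconv : Convex ℝ (insert p {q | f q < f p}) := by
    refine convex_iff_pairwise_pos.2 ?_
    rintro x (rfl | hx) y (rfl | hy) hxy a b ha hb hab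
    · exact (hxy rfl).elim
    · have hcomb : f (a • x + b • y) < a * f x + b * f x := by
        simpa using mul_lt_mul_of_pos_left hy hb
      exact Or.inr (by rwa [← add_mul, hab, one_mul] at hcomb)
    · have hcomb : f (a • x + b • y) < a * f y + b * f y := by
        simpa using mul_lt_mul_of_pos_left hx ha
      exact Or.inr (by rwa [← add_mul, hab, one_mul] at hcomb)
    · exact Or.inr (hhalf hx hy ha.le hb.le hab)
  have hpH : p ∉ {q | f q < f p} := lt_irrefl (f p)
  have hpK : p ∈ (insert p {q | f q < f p}).extremePoints ℝ := by
    rw [hconv.mem_extremePoints_iff_convex_sdiff, Set.insert_sdiff_self_of_notMem hpH]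
    exact ⟨Set.mem_insert _ _, hhalf⟩
  have hAK : A ⊆ insert p {q | f q < f p} := fun q hq ↦ (eq_or_ne q p).imp id (hf q hq)
  exact inter_extremePoints_subset_extremePoints_of_subset (convexHull_min hAK hconv)
    ⟨subset_convexHull ℝ A hp, hpK⟩

lemma hullVertices_image (φ : E →ᵃ[ℝ] F) (hφ : Function.Injective φ) (A : Set E) :
    hullVertices (φ '' A) = φ '' hullVertices A := by
  ext y
  simp only [hullVertices, ← AffineMap.image_convexHull, mem_extremePoints_iff_left]
  constructor
  · rintro ⟨⟨x, hx, rfl⟩, hext⟩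
    refine ⟨x, ⟨hx, fun _ h₁ _ h₂ hmem ↦ hφ (hext _ ⟨_, h₁, rfl⟩ _ ⟨_, h₂, rfl⟩ ?_)⟩, rfl⟩
    rw [← image_openSegment]
    exact ⟨x, hmem, rfl⟩
  · rintro ⟨x, ⟨hx, hext⟩, rfl⟩
    refine ⟨⟨x, hx, rfl⟩, ?_⟩
    rintro _ ⟨x₁, h₁, rfl⟩ _ ⟨x₂, h₂, rfl⟩ hmem
    rw [← image_openSegment, hφ.mem_set_image] at hmem
    rw [hext h₁ h₂ hmem]

end Module

section Normed

variable {E : Type*} [NormedAddCommGroup E] [NormedSpace ℝ E]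

lemma exists_forall_lt_of_mem_hullVertices {A : Set E} (hA : A.Finite) {p : E}
    (hp : p ∈ hullVertices A) : ∃ f : StrongDual ℝ E, ∀ q ∈ A, q ≠ p → f q < f p := by
  obtain ⟨f, u, hfu, hup⟩ := geometric_hahn_banach_closed_point (convex_convexHull ℝ (A \ {p}))
    ((hA.subset Set.sdiff_subset).isClosed_convexHull (𝕜 := ℝ))
    (notMem_convexHull_sdiff_singleton hp)
  exact ⟨f, fun q hq hqp ↦ (hfu q (subset_convexHull ℝ _ ⟨hq, hqp⟩)).trans hup⟩

variable {ι : Type*} [Finite ι]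

lemma mem_hullVertices_range_iff (ω : ι → E) (i : ι) :
    ω i ∈ hullVertices (Set.range ω) ↔
      ∃ J : Set ι, (∀ j ∈ J, ω j = ω i) ∧ ∃ f : StrongDual ℝ E, ∀ j ∉ J, f (ω j) < f (ω i) := by
  constructor
  · intro hi
    obtain ⟨f, hf⟩ := exists_forall_lt_of_mem_hullVertices (Set.finite_range ω) hi
    exact ⟨{j | ω j = ω i}, fun j hj ↦ hj, f, fun j hj ↦ hf _ ⟨j, rfl⟩ hj⟩
  · rintro ⟨J, hJ, f, hf⟩
    refine mem_hullVertices_of_forall_lt ⟨i, rfl⟩ f.toLinearMap ?_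
    rintro _ ⟨j, rfl⟩ hj
    exact hf j fun hjJ ↦ hj (hJ j hjJ)

variable [MeasurableSpace E] [BorelSpace E] [SecondCountableTopology E]

lemma measurableSet_mem_hullVertices_range (i : ι) :
    MeasurableSet {ω : ι → E | ω i ∈ hullVertices (Set.range ω)} := by
  simp only [mem_hullVertices_range_iff, Set.ofPred_exists, Set.ofPred_and]
  have : Countable (Set ι) := Finite.to_countable
  refine .iUnion fun J ↦ .inter ?_ ?_
  · simp only [Set.ofPred_forall]
    exact (isClosed_biInter fun j _ ↦
      isClosed_eq (continuous_apply j) (continuous_apply i)).measurableSet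
  · refine (isOpen_iUnion fun f ↦ ?_).measurableSet
    simp only [Set.ofPred_forall]
    exact (Set.toFinite _).isOpen_biInter fun j _ ↦
      isOpen_lt (f.continuous.comp (continuous_apply j)) (f.continuous.comp (continuous_apply i))

end Normed

section Counting

variable {E : Type*} [AddCommGroup E] [Module ℝ E] {ι : Type*} [LinearOrder ι]

/-- The configurations in which `ω i` is a hull vertex not listed under a smaller index; each
vertex of the hull is counted by exactly one such `i`. -/
def firstVertexEvent (i : ι) : Set (ι → E) :=
  {ω | (∀ j < i, ω j ≠ ω i) ∧ ω i ∈ hullVertices (Set.range ω)}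

lemma ncard_hullVertices_range [Fintype ι] (ω : ι → E) :
    ((hullVertices (Set.range ω)).ncard : ℝ) =
      ∑ i, (firstVertexEvent i).indicator (fun _ ↦ (1 : ℝ)) ω := by
  classical
  have himage : hullVertices (Set.range ω) = ω '' {i | ω ∈ firstVertexEvent i} := by
    refine Set.Subset.antisymm (fun p hp ↦ ?_) (Set.image_subset_iff.2 fun i hi ↦ hi.2)
    obtain ⟨j, rfl⟩ := hullVertices_subset _ hp
    obtain ⟨i, hi, hmin⟩ := WellFounded.has_min (wellFounded_lt (α := ι)) {i | ω i = ω j} ⟨j, rfl⟩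
    rw [Set.mem_ofPred_eq] at hi
    exact ⟨i, ⟨fun k hk h ↦ hmin k (h.trans hi) hk, hi ▸ hp⟩, hi⟩
  have hinj : Set.InjOn ω {i | ω ∈ firstVertexEvent i} := fun i hi j hj h ↦
    le_antisymm (not_lt.1 fun hlt ↦ hi.1 j hlt h.symm) (not_lt.1 fun hlt ↦ hj.1 i hlt h)
  rw [himage, hinj.ncard_image, Set.ncard_eq_toFinset_card']
  simp [Set.indicator_apply]

end Counting

lemma measurableSet_firstVertexEvent {E : Type*} [NormedAddCommGroup E] [NormedSpace ℝ E]
    [MeasurableSpace E] [BorelSpace E] [SecondCountableTopology E] {ι : Type*} [LinearOrder ι]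
    [Finite ι] (i : ι) : MeasurableSet (firstVertexEvent i : Set (ι → E)) := by
  rw [firstVertexEvent, Set.ofPred_and]
  refine .inter ?_ (measurableSet_mem_hullVertices_range i)
  simp only [Set.ofPred_forall]
  exact .iInter fun j ↦ .iInter fun _ ↦
    (measurableSet_eq_fun (measurable_pi_apply j) (measurable_pi_apply i)).compl

end HullVertices

section ParabolicGeometry

/-- Twice the signed area of the triangle `p q r`. -/
def orient (p q r : ℝ × ℝ) : ℝ :=
  (q.1 - p.1) * (r.2 - p.2) - (q.2 - p.2) * (r.1 - p.1)

lemma orient_smul_sub (p l r z : ℝ × ℝ) :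
    orient p l r • (z - p) = orient p z r • (l - p) + orient p l z • (r - p) := by
  ext <;> simp only [orient, Prod.smul_fst, Prod.smul_snd, Prod.fst_add, Prod.snd_add,
    Prod.fst_sub, Prod.snd_sub, smul_eq_mul] <;> ring

lemma orient_mul_map_sub (f : ℝ × ℝ →ₗ[ℝ] ℝ) (p l r z : ℝ × ℝ) :
    orient p l r * (f z - f p) = orient p z r * (f l - f p) + orient p l z * (f r - f p) := by
  simpa using congrArg f (orient_smul_sub p l r z)

lemma map_lt_of_orient_pos {f : ℝ × ℝ →ₗ[ℝ] ℝ} {p l r z : ℝ × ℝ} (hlr : 0 < orient p l r)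
    (hzr : 0 < orient p z r) (hlz : 0 < orient p l z) (hl : f l < f p) (hr : f r < f p) :
    f z < f p := by
  refine sub_neg.1 (neg_of_mul_neg_right ?_ hlr.le)
  rw [orient_mul_map_sub]
  exact add_neg (mul_neg_of_pos_of_neg hzr (sub_neg.2 hl))
    (mul_neg_of_pos_of_neg hlz (sub_neg.2 hr))

lemma map_lt_of_orient_neg {f : ℝ × ℝ →ₗ[ℝ] ℝ} {p l r z : ℝ × ℝ} (hlr : orient p l r < 0)
    (hzr : 0 < orient p z r) (hlz : 0 < orient p l z) (hl : f l < f p) (hr : f r < f p) :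
    f p < f z := by
  refine sub_pos.1 (pos_of_mul_neg_right ?_ hlr.le)
  rw [orient_mul_map_sub]
  exact add_neg (mul_neg_of_pos_of_neg hzr (sub_neg.2 hl))
    (mul_neg_of_pos_of_neg hlz (sub_neg.2 hr))

-- The functional `p.1 * u - v` is maximal over the parabola `u ^ 2 = 2 * v` at abscissa `p.1`.
lemma mem_hullVertices_of_tangent_lt {A : Set (ℝ × ℝ)} {p : ℝ × ℝ} (hp : p ∈ A)
    (h : ∀ q ∈ A, q ≠ p → p.1 * (q.1 - p.1) < q.2 - p.2) : p ∈ hullVertices A := by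
  refine mem_hullVertices_of_forall_lt hp (p.1 • LinearMap.fst ℝ ℝ ℝ - LinearMap.snd ℝ ℝ ℝ)
    fun q hq hqp ↦ ?_
  have := h q hq hqp
  simp only [LinearMap.sub_apply, LinearMap.smul_apply, LinearMap.fst_apply,
    LinearMap.snd_apply, smul_eq_mul]
  linarith

lemma tangent_lt_of_lt_sq {p q : ℝ × ℝ} (hq : q.1 ^ 2 ≤ 2 * q.2)
    (h : 2 * p.2 - p.1 ^ 2 < (q.1 - p.1) ^ 2) : p.1 * (q.1 - p.1) < q.2 - p.2 := by
  linarith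

/-- The points inside the parabola `u ^ 2 = 2 * v` at depth more than `100`. -/
def farRegion : Set (ℝ × ℝ) := {q | q.1 ^ 2 ≤ 2 * q.2 ∧ 100 < q.2}

/-- The cell of the left pillar; together with a point of `rightCell` it screens every far point
from the points of `window`. -/
def leftCell : Set (ℝ × ℝ) := Set.Icc (-3.1) (-3) ×ˢ Set.Icc 4.9 5.1

/-- The cell of the right pillar, the mirror image of `leftCell`. -/
def rightCell : Set (ℝ × ℝ) := Set.Icc 3 3.1 ×ˢ Set.Icc 4.9 5.1

/-- The cell of the point that is a hull vertex if and only if it is not covered. -/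
def hiddenCell : Set (ℝ × ℝ) := Set.Icc 1 1.1 ×ˢ Set.Icc 1 1.1

/-- The cell of the movable point directly below `hiddenCell`, where it hides that cell from the
boundary. -/
def coverCell : Set (ℝ × ℝ) := Set.Icc 1 1.1 ×ˢ Set.Icc 0.65 0.7

/-- The mirror image of `coverCell`, where the movable point does not hide `hiddenCell`. -/
def awayCell : Set (ℝ × ℝ) := Set.Icc (-1.1) (-1) ×ˢ Set.Icc 0.65 0.7

/-- A box containing `hiddenCell`, `coverCell` and `awayCell`. -/
def window : Set (ℝ × ℝ) := Set.Icc (-1.1) 1.1 ×ˢ Set.Icc 0.65 1.1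

lemma tangent_lt_of_mem_farRegion {p q : ℝ × ℝ} (hp₁ : |p.1| ≤ 3.1) (hp₂ : p.2 ≤ 5.1)
    (hq : q ∈ farRegion) : p.1 * (q.1 - p.1) < q.2 - p.2 := by
  obtain ⟨hq, hq₂⟩ := hq
  have hsq : p.1 ^ 2 ≤ 3.1 ^ 2 := sq_le_sq' (neg_le_of_abs_le hp₁) (le_of_abs_le hp₁)
  have hamgm : p.1 * q.1 ≤ 2 * p.1 ^ 2 + q.1 ^ 2 / 8 := by
    linarith [sq_nonneg (4 * p.1 - q.1)]
  linarith

lemma orient_pos_of_mem_farRegion {p q r : ℝ × ℝ} (hp : p ∈ farRegion) (h₁ : 1.9 ≤ r.1 - q.1)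
    (h₂ : |q.2 - r.2| ≤ 5.1) (hqr : -40 ≤ q.1 * r.2 - q.2 * r.1) : 0 < orient p q r := by
  obtain ⟨hp, hp₂⟩ := hp
  have hp₁ : |p.1| ≤ p.2 / 7 := abs_le_of_sq_le_sq (by nlinarith) (by linarith)
  have hu : -(p.2 / 7 * 5.1) ≤ p.1 * (q.2 - r.2) := by
    refine neg_le_of_abs_le ?_
    rw [abs_mul]
    gcongr
  have hv : p.2 * 1.9 ≤ p.2 * (r.1 - q.1) := by gcongr
  have horient : orient p q r =
      p.2 * (r.1 - q.1) + p.1 * (q.2 - r.2) + (q.1 * r.2 - q.2 * r.1) := by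
    rw [orient]; ring
  linarith

variable {P Y : Set (ℝ × ℝ)} {l r k z : ℝ × ℝ}

lemma orient_pos_of_pillars {p : ℝ × ℝ} (hp : p ∈ farRegion) (hl : l ∈ leftCell)
    (hr : r ∈ rightCell) (hz : z ∈ window) :
    0 < orient p l r ∧ 0 < orient p z r ∧ 0 < orient p l z := by
  obtain ⟨⟨hl₁, hl₂⟩, hl₃, hl₄⟩ := hl
  obtain ⟨⟨hr₁, hr₂⟩, hr₃, hr₄⟩ := hr
  obtain ⟨⟨hz₁, hz₂⟩, hz₃, hz₄⟩ := hz
  refine ⟨orient_pos_of_mem_farRegion hp ?_ ?_ ?_, orient_pos_of_mem_farRegion hp ?_ ?_ ?_,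
    orient_pos_of_mem_farRegion hp ?_ ?_ ?_⟩
  all_goals first | linarith | exact abs_le.2 ⟨by linarith, by linarith⟩ | nlinarith

lemma leftCell_mem_hullVertices {A : Set (ℝ × ℝ)} (hl : l ∈ leftCell) (hlA : l ∈ A)
    (hA : A ⊆ insert l (farRegion ∪ rightCell ∪ window)) : l ∈ hullVertices A := by
  obtain ⟨⟨hl₁, hl₂⟩, hl₃, hl₄⟩ := hl
  refine mem_hullVertices_of_tangent_lt hlA fun q hq hql ↦ ?_
  obtain rfl | (hq | hq) | hq := hA hq
  · exact (hql rfl).elim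
  · exact tangent_lt_of_mem_farRegion (abs_le.2 ⟨hl₁, by linarith⟩) hl₄ hq
  all_goals
    obtain ⟨⟨hq₁, hq₂⟩, hq₃, _⟩ := hq
    exact tangent_lt_of_lt_sq (by nlinarith) (by nlinarith)

lemma rightCell_mem_hullVertices {A : Set (ℝ × ℝ)} (hr : r ∈ rightCell) (hrA : r ∈ A)
    (hA : A ⊆ insert r (farRegion ∪ leftCell ∪ window)) : r ∈ hullVertices A := by
  obtain ⟨⟨hr₁, hr₂⟩, hr₃, hr₄⟩ := hr
  refine mem_hullVertices_of_tangent_lt hrA fun q hq hqr ↦ ?_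
  obtain rfl | (hq | hq) | hq := hA hq
  · exact (hqr rfl).elim
  · exact tangent_lt_of_mem_farRegion (abs_le.2 ⟨by linarith, hr₂⟩) hr₄ hq
  all_goals
    obtain ⟨⟨hq₁, hq₂⟩, hq₃, _⟩ := hq
    exact tangent_lt_of_lt_sq (by nlinarith) (by nlinarith)

lemma hiddenCell_subset_window : hiddenCell ⊆ window :=
  Set.prod_mono (Set.Icc_subset_Icc (by norm_num) le_rfl) (Set.Icc_subset_Icc (by norm_num) le_rfl)

lemma coverCell_subset_window : coverCell ⊆ window :=
  Set.prod_mono (Set.Icc_subset_Icc (by norm_num) le_rfl) (Set.Icc_subset_Icc le_rfl (by norm_num))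

lemma awayCell_subset_window : awayCell ⊆ window :=
  Set.prod_mono (Set.Icc_subset_Icc le_rfl (by norm_num)) (Set.Icc_subset_Icc le_rfl (by norm_num))

lemma pillars_union_far_subset (hP : P ⊆ farRegion) (hl : l ∈ leftCell) (hr : r ∈ rightCell) :
    P ∪ {l, r} ⊆ farRegion ∪ leftCell ∪ rightCell := by
  rintro q (hq | rfl | rfl)
  exacts [.inl (.inl (hP hq)), .inl (.inr hl), .inr hr]

lemma disjoint_window : Disjoint (farRegion ∪ leftCell ∪ rightCell) window := by
  refine Set.disjoint_left.2 ?_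
  rintro q ((⟨-, hq⟩ | ⟨-, hq, -⟩) | ⟨-, hq, -⟩) ⟨-, -, hq'⟩ <;> linarith

-- A far point exposed against both pillars is exposed against the window, which lies in the cone
-- it spans with them; the pillars themselves are always exposed.
lemma mem_hullVertices_union_window_iff (hfin : P.Finite) (hP : P ⊆ farRegion)
    (hl : l ∈ leftCell) (hr : r ∈ rightCell) (hY : Y ⊆ window) {p : ℝ × ℝ} (hp : p ∈ P ∪ {l, r}) :
    p ∈ hullVertices (P ∪ {l, r} ∪ Y) ↔ p ∈ hullVertices (P ∪ {l, r}) := by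
  refine ⟨mem_hullVertices_of_subset Set.subset_union_left hp, fun hpV ↦ ?_⟩
  obtain hpP | rfl | rfl := hp
  · obtain ⟨f, hf⟩ := exists_forall_lt_of_mem_hullVertices (hfin.union (Set.toFinite _)) hpV
    have hne {q : ℝ × ℝ} (hq : q.2 ≤ 5.1) : q ≠ p := by
      rintro rfl
      linarith [(hP hpP).2]
    have hfl : f l < f p := hf l (by simp) (hne hl.2.2)
    have hfr : f r < f p := hf r (by simp) (hne hr.2.2)
    refine mem_hullVertices_of_forall_lt (.inl (.inl hpP)) f.toLinearMap fun q hq hqp ↦ ?_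
    obtain hq | hq := hq
    · exact hf q hq hqp
    · obtain ⟨hlr, hqr, hlq⟩ := orient_pos_of_pillars (hP hpP) hl hr (hY hq)
      exact map_lt_of_orient_pos (f := f.toLinearMap) hlr hqr hlq hfl hfr
  · refine leftCell_mem_hullVertices hl (by simp) ?_
    rintro q ((hq | rfl | rfl) | hq)
    exacts [.inr (.inl (.inl (hP hq))), .inl rfl, .inr (.inl (.inr hr)), .inr (.inr (hY hq))]
  · refine rightCell_mem_hullVertices hr (by simp) ?_
    rintro q ((hq | rfl | rfl) | hq)
    exacts [.inr (.inl (.inl (hP hq))), .inr (.inl (.inr hl)), .inl rfl, .inr (.inr (hY hq))]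

lemma hiddenCell_mem_hullVertices {A : Set (ℝ × ℝ)} (hk : k ∈ hiddenCell) (hkA : k ∈ A)
    (hA : A ⊆ insert k (farRegion ∪ leftCell ∪ rightCell ∪ awayCell)) : k ∈ hullVertices A := by
  obtain ⟨⟨hk₁, hk₂⟩, hk₃, hk₄⟩ := hk
  refine mem_hullVertices_of_tangent_lt hkA fun q hq hqk ↦ ?_
  obtain rfl | ((hq | hq) | hq) | hq := hA hq
  · exact (hqk rfl).elim
  · exact tangent_lt_of_mem_farRegion (abs_le.2 ⟨by linarith, by linarith⟩) (by linarith) hq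
  all_goals
    obtain ⟨⟨hq₁, hq₂⟩, hq₃, _⟩ := hq
    exact tangent_lt_of_lt_sq (by nlinarith) (by nlinarith)

lemma awayCell_mem_hullVertices {A : Set (ℝ × ℝ)} (hz : z ∈ awayCell) (hzA : z ∈ A)
    (hA : A ⊆ insert z (farRegion ∪ leftCell ∪ rightCell ∪ hiddenCell)) : z ∈ hullVertices A := by
  obtain ⟨⟨hz₁, hz₂⟩, hz₃, hz₄⟩ := hz
  refine mem_hullVertices_of_tangent_lt hzA fun q hq hqz ↦ ?_
  obtain rfl | ((hq | hq) | hq) | hq := hA hq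
  · exact (hqz rfl).elim
  · exact tangent_lt_of_mem_farRegion (abs_le.2 ⟨by linarith, by linarith⟩) (by linarith) hq
  all_goals
    obtain ⟨⟨hq₁, hq₂⟩, hq₃, _⟩ := hq
    exact tangent_lt_of_lt_sq (by nlinarith) (by nlinarith)

lemma coverCell_mem_hullVertices {A : Set (ℝ × ℝ)} (hz : z ∈ coverCell) (hzA : z ∈ A)
    (hA : A ⊆ insert z (farRegion ∪ leftCell ∪ rightCell ∪ hiddenCell)) : z ∈ hullVertices A := by
  obtain ⟨⟨hz₁, hz₂⟩, hz₃, hz₄⟩ := hz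
  refine mem_hullVertices_of_tangent_lt hzA fun q hq hqz ↦ ?_
  obtain rfl | ((hq | hq) | hq) | hq := hA hq
  · exact (hqz rfl).elim
  · exact tangent_lt_of_mem_farRegion (abs_le.2 ⟨by linarith, by linarith⟩) (by linarith) hq
  · obtain ⟨⟨hq₁, hq₂⟩, hq₃, _⟩ := hq
    exact tangent_lt_of_lt_sq (by nlinarith) (by nlinarith)
  · obtain ⟨⟨hq₁, hq₂⟩, hq₃, _⟩ := hq
    exact tangent_lt_of_lt_sq (by nlinarith) (by nlinarith)
  · obtain ⟨⟨_, hq₂⟩, hq₃, _⟩ := hq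
    nlinarith

lemma notMem_hullVertices_of_covered {A : Set (ℝ × ℝ)} (hA : A.Finite) (hl : l ∈ leftCell)
    (hr : r ∈ rightCell) (hk : k ∈ hiddenCell) (hz : z ∈ coverCell) (hlA : l ∈ A) (hrA : r ∈ A)
    (hzA : z ∈ A) : k ∉ hullVertices A := fun hkV ↦ by
  obtain ⟨f, hf⟩ := exists_forall_lt_of_mem_hullVertices hA hkV
  obtain ⟨⟨_, hl₂⟩, hl₃, hl₄⟩ := hl
  obtain ⟨⟨hr₁, _⟩, hr₃, hr₄⟩ := hr
  obtain ⟨⟨hk₁, hk₂⟩, hk₃, hk₄⟩ := hk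
  obtain ⟨⟨hz₁, hz₂⟩, hz₃, hz₄⟩ := hz
  have hlr : orient k l r < 0 := by rw [orient]; nlinarith
  have hzr : 0 < orient k z r := by rw [orient]; nlinarith
  have hlz : 0 < orient k l z := by rw [orient]; nlinarith
  have hlt : f k < f z := map_lt_of_orient_neg (f := f.toLinearMap) hlr hzr hlz
    (hf l hlA fun h ↦ by linarith [congrArg Prod.fst h])
    (hf r hrA fun h ↦ by linarith [congrArg Prod.fst h])
  exact hlt.not_gt (hf z hzA fun h ↦ by linarith [congrArg Prod.snd h])

section Count

variable (hfin : P.Finite) (hP : P ⊆ farRegion) (hl : l ∈ leftCell) (hr : r ∈ rightCell)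
  (hk : k ∈ hiddenCell)
include hfin hP hl hr hk

lemma hullVertices_union_away (hz : z ∈ awayCell) :
    hullVertices (P ∪ {l, r} ∪ {k, z}) = hullVertices (P ∪ {l, r}) ∪ {k, z} := by
  have hbase := pillars_union_far_subset hP hl hr
  have hY : {k, z} ⊆ window :=
    Set.pair_subset (hiddenCell_subset_window hk) (awayCell_subset_window hz)
  refine Set.Subset.antisymm (fun p hp ↦ ?_) (Set.union_subset (fun p hp ↦ ?_) ?_)
  · refine (hullVertices_subset _ hp).imp_left fun hpB ↦ ?_
    rwa [← mem_hullVertices_union_window_iff hfin hP hl hr hY hpB]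
  · rwa [mem_hullVertices_union_window_iff hfin hP hl hr hY (hullVertices_subset _ hp)]
  · refine Set.pair_subset (hiddenCell_mem_hullVertices hk (by simp) ?_)
      (awayCell_mem_hullVertices hz (by simp) ?_)
    · rintro q (hq | rfl | rfl)
      exacts [.inr (.inl (hbase hq)), .inl rfl, .inr (.inr hz)]
    · rintro q (hq | rfl | rfl)
      exacts [.inr (.inl (hbase hq)), .inr (.inr hk), .inl rfl]

lemma hullVertices_union_cover (hz : z ∈ coverCell) :
    hullVertices (P ∪ {l, r} ∪ {k, z}) = hullVertices (P ∪ {l, r}) ∪ {z} := by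
  have hbase := pillars_union_far_subset hP hl hr
  have hY : {k, z} ⊆ window :=
    Set.pair_subset (hiddenCell_subset_window hk) (coverCell_subset_window hz)
  have hkV : k ∉ hullVertices (P ∪ {l, r} ∪ {k, z}) :=
    notMem_hullVertices_of_covered ((hfin.union (Set.toFinite _)).union (Set.toFinite _))
      hl hr hk hz (by simp) (by simp) (by simp)
  refine Set.Subset.antisymm (fun p hp ↦ ?_) (Set.union_subset (fun p hp ↦ ?_) ?_)
  · obtain hpB | rfl | rfl := hullVertices_subset _ hp
    · exact .inl (by rwa [← mem_hullVertices_union_window_iff hfin hP hl hr hY hpB])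
    · exact (hkV hp).elim
    · exact .inr rfl
  · rwa [mem_hullVertices_union_window_iff hfin hP hl hr hY (hullVertices_subset _ hp)]
  · refine Set.singleton_subset_iff.2 (coverCell_mem_hullVertices hz (by simp) ?_)
    rintro q (hq | rfl | rfl)
    exacts [.inr (.inl (hbase hq)), .inr (.inr hk), .inl rfl]

lemma ncard_hullVertices_away_eq_cover_add_one {z' : ℝ × ℝ} (hz : z ∈ awayCell)
    (hz' : z' ∈ coverCell) :
    (hullVertices (P ∪ {l, r} ∪ {k, z})).ncard =
      (hullVertices (P ∪ {l, r} ∪ {k, z'})).ncard + 1 := by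
  have hVfin : (hullVertices (P ∪ {l, r})).Finite :=
    (hfin.union (Set.toFinite _)).subset (hullVertices_subset _)
  have hdisj {Y : Set (ℝ × ℝ)} (hY : Y ⊆ window) : Disjoint (hullVertices (P ∪ {l, r})) Y :=
    disjoint_window.mono ((hullVertices_subset _).trans (pillars_union_far_subset hP hl hr)) hY
  have hkz : k ≠ z := by
    rintro rfl
    linarith [hk.1.1, hz.1.2]
  rw [hullVertices_union_away hfin hP hl hr hk hz, hullVertices_union_cover hfin hP hl hr hk hz',
    Set.ncard_union_eq (hdisj (Set.pair_subset (hiddenCell_subset_window hk)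
      (awayCell_subset_window hz))) hVfin,
    Set.ncard_union_eq (hdisj (Set.singleton_subset_iff.2 (coverCell_subset_window hz'))) hVfin,
    Set.ncard_pair hkz, Set.ncard_singleton]

end Count

lemma measurableSet_farRegion : MeasurableSet farRegion := by
  rw [farRegion, Set.ofPred_and]
  exact (measurableSet_le (by fun_prop) (by fun_prop)).inter
    (measurableSet_lt measurable_const measurable_snd)

/-- The union of all the cells: the part of the chart inspected by the construction. -/
def cellRegion : Set (ℝ × ℝ) := leftCell ∪ rightCell ∪ window

lemma disjoint_farRegion_cellRegion : Disjoint farRegion cellRegion := by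
  rw [Set.disjoint_left]
  rintro p ⟨-, hp⟩ ((h | h) | h) <;>
  · have := h.2.2
    norm_num at this
    linarith

lemma mk_neg_mem_coverCell_iff {p : ℝ × ℝ} : (-p.1, p.2) ∈ coverCell ↔ p ∈ awayCell := by
  simp only [coverCell, awayCell, Set.mem_prod, Set.mem_Icc]
  constructor <;> rintro ⟨⟨_, _⟩, h⟩ <;> exact ⟨⟨by linarith, by linarith⟩, h⟩

lemma disjoint_awayCell_union_coverCell :
    Disjoint (farRegion ∪ leftCell ∪ rightCell ∪ hiddenCell) (awayCell ∪ coverCell) := by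
  refine Set.disjoint_union_left.2 ⟨disjoint_window.mono_right
    (Set.union_subset awayCell_subset_window coverCell_subset_window), Set.disjoint_left.2 ?_⟩
  rintro p ⟨-, hp, -⟩ (⟨-, -, hp'⟩ | ⟨-, -, hp'⟩) <;> linarith

/-- The cells of a pivotal configuration, in the order left pillar, right pillar, hidden point,
movable point. -/
def cell : Fin 4 → Set (ℝ × ℝ) := ![leftCell, rightCell, hiddenCell, awayCell]

lemma cell_subset_cellRegion (a : Fin 4) : cell a ⊆ cellRegion := by
  fin_cases a
  · exact Set.subset_union_left.trans Set.subset_union_left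
  · exact Set.subset_union_right.trans Set.subset_union_left
  · exact hiddenCell_subset_window.trans Set.subset_union_right
  · exact awayCell_subset_window.trans Set.subset_union_right

lemma exists_cell_eq_Icc_prod (a : Fin 4) :
    ∃ u₁ u₂ v₁ v₂ : ℝ, u₁ ≤ u₂ ∧ v₁ ≤ v₂ ∧ 1 / 200 ≤ (u₂ - u₁) * (v₂ - v₁) ∧
      cell a = Set.Icc u₁ u₂ ×ˢ Set.Icc v₁ v₂ := by
  fin_cases a <;> refine ⟨_, _, _, _, ?_, ?_, ?_, rfl⟩ <;> norm_num

lemma pairwise_disjoint_cell : Pairwise (Function.onFun Disjoint cell) := by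
  refine (pairwise_disjoint_on _).2 fun a a' ha ↦ Set.disjoint_left.2 fun p hp hp' ↦ ?_
  fin_cases a <;> fin_cases a' <;> first
    | exact absurd ha (by decide)
    | obtain ⟨⟨_, _⟩, _, _⟩ := hp
      obtain ⟨⟨_, _⟩, _, _⟩ := hp'
      linarith

end ParabolicGeometry

local notation "ℝ²" => EuclideanSpace ℝ (Fin 2)

section BetaMeasure

/-- The density of `betaMeasure β` as a function of the distance to the origin. -/
noncomputable def betaProfile (β r : ℝ) : ℝ :=
  if r ≤ 1 then (β + 1) / Real.pi * (1 - r ^ 2) ^ β else 0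

lemma measurable_betaProfile (β : ℝ) : Measurable (betaProfile β) :=
  .ite (measurableSet_le measurable_id measurable_const) (by fun_prop) measurable_const

lemma betaMeasure_eq_withDensity (β : ℝ) :
    betaMeasure β = volume.withDensity fun x ↦ ENNReal.ofReal (betaProfile β ‖x‖) :=
  rfl

variable {β : ℝ}

lemma measurePreserving_betaMeasure (F : ℝ² ≃ₗᵢ[ℝ] ℝ²) :
    MeasurePreserving F (betaMeasure β) (betaMeasure β) := by
  have hF : Measurable F := F.continuous.measurable
  have hdensity : Measurable fun x : ℝ² ↦ ENNReal.ofReal (betaProfile β ‖x‖) :=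
    ((measurable_betaProfile β).comp measurable_norm).ennreal_ofReal
  refine ⟨hF, Measure.ext fun s hs ↦ ?_⟩
  rw [Measure.map_apply hF hs, betaMeasure_eq_withDensity, withDensity_apply _ (hF hs),
    withDensity_apply _ hs, ← F.measurePreserving.setLIntegral_comp_preimage hs hdensity]
  simp only [F.norm_map]

lemma betaProfile_of_le_one {r : ℝ} (hr : r ≤ 1) :
    betaProfile β r = (β + 1) / Real.pi * (1 - r ^ 2) ^ β :=
  if_pos hr

lemma betaProfile_of_one_lt {r : ℝ} (hr : 1 < r) : betaProfile β r = 0 :=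
  if_neg hr.not_ge

lemma integral_mul_one_sub_sq_rpow (hβ : 0 ≤ β) :
    ∫ r in (0 : ℝ)..1, r * (1 - r ^ 2) ^ β = 1 / (2 * (β + 1)) := by
  have hβ₁ : β + 1 ≠ 0 := by positivity
  have hderiv (r : ℝ) : HasDerivAt (fun r : ℝ ↦ -(1 - r ^ 2) ^ (β + 1) / (2 * (β + 1)))
      (r * (1 - r ^ 2) ^ β) r := by
    have hbase : HasDerivAt (fun r : ℝ ↦ 1 - r ^ 2) (-(2 * r)) r := by
      simpa using (hasDerivAt_pow 2 r).const_sub 1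
    have hpow := ((hbase.rpow_const (p := β + 1) (.inr (by linarith))).neg).div_const (2 * (β + 1))
    refine hpow.congr_deriv ?_
    rw [add_sub_cancel_right]
    field_simp
  have hcont : Continuous fun r : ℝ ↦ r * (1 - r ^ 2) ^ β :=
    continuous_id.mul (.rpow_const (by fun_prop) fun _ ↦ .inr hβ)
  rw [intervalIntegral.integral_eq_sub_of_hasDerivAt (fun r _ ↦ hderiv r)
    (hcont.intervalIntegrable _ _), one_pow, sub_self, Real.zero_rpow hβ₁]
  simp [neg_div]

lemma integral_betaProfile_norm (hβ : 0 ≤ β) : ∫ x : ℝ², betaProfile β ‖x‖ = 1 := by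
  have hradial : ∫ r in Set.Ioi (0 : ℝ), r ^ (Module.finrank ℝ ℝ² - 1) • betaProfile β r =
      1 / (2 * Real.pi) := by
    calc ∫ r in Set.Ioi (0 : ℝ), r ^ (Module.finrank ℝ ℝ² - 1) • betaProfile β r
        = ∫ r in Set.Ioi (0 : ℝ), (Set.Iic 1).indicator
            (fun r ↦ (β + 1) / Real.pi * (r * (1 - r ^ 2) ^ β)) r := by
          congr! 2 with r
          simp [betaProfile, Set.indicator, mul_left_comm]
      _ = ∫ r in (0 : ℝ)..1, (β + 1) / Real.pi * (r * (1 - r ^ 2) ^ β) := by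
          rw [setIntegral_indicator measurableSet_Iic, Set.Ioi_inter_Iic,
            intervalIntegral.integral_of_le zero_le_one]
      _ = 1 / (2 * Real.pi) := by
          rw [intervalIntegral.integral_const_mul, integral_mul_one_sub_sq_rpow hβ]
          field_simp
  have hball : (volume : Measure ℝ²).real (Metric.ball 0 1) = Real.pi := by
    simp [Measure.real, EuclideanSpace.volume_ball_fin_two, Real.pi_pos.le]
  rw [integral_fun_norm_addHaar volume, hball, hradial]
  simp [Real.pi_ne_zero]

lemma integrable_betaProfile_norm (hβ : 0 ≤ β) :
    Integrable fun x : ℝ² ↦ betaProfile β ‖x‖ :=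
  .of_integral_ne_zero (by simp [integral_betaProfile_norm hβ])

lemma betaProfile_nonneg (hβ : 0 ≤ β) {r : ℝ} (hr : 0 ≤ r) : 0 ≤ betaProfile β r := by
  rw [betaProfile]
  split_ifs with h
  · have : 0 ≤ 1 - r ^ 2 := by nlinarith
    positivity
  · rfl

lemma betaMeasure_real_apply (hβ : 0 ≤ β) {A : Set ℝ²} (hA : MeasurableSet A) :
    (betaMeasure β).real A = ∫ x in A, betaProfile β ‖x‖ := by
  rw [measureReal_def, betaMeasure_eq_withDensity, withDensity_apply _ hA,
    integral_eq_lintegral_of_nonneg_ae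
      (.of_forall fun x ↦ betaProfile_nonneg hβ (norm_nonneg x))
      ((measurable_betaProfile β).comp measurable_norm).aestronglyMeasurable]

lemma isProbabilityMeasure_betaMeasure (hβ : 0 ≤ β) : IsProbabilityMeasure (betaMeasure β) := by
  rw [isProbabilityMeasure_iff_real, betaMeasure_real_apply hβ .univ, setIntegral_univ,
    integral_betaProfile_norm hβ]

lemma mul_volume_real_le_betaMeasure_real (hβ : 0 ≤ β) {t : ℝ} (ht : 0 ≤ t) {A : Set ℝ²}
    (hA : MeasurableSet A) (h : ∀ x ∈ A, t ≤ 1 - ‖x‖ ^ 2) :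
    (β + 1) / Real.pi * t ^ β * volume.real A ≤ (betaMeasure β).real A := by
  have hnorm {x : ℝ²} (hx : x ∈ A) : ‖x‖ ≤ 1 := by
    nlinarith [h x hx, norm_nonneg x]
  have hfinite : volume A ≠ ⊤ := ((measure_mono fun x hx ↦ mem_closedBall_zero_iff.2
    (hnorm hx)).trans_lt measure_closedBall_lt_top).ne
  rw [betaMeasure_real_apply hβ hA]
  refine setIntegral_ge_of_const_le_real hA hfinite (fun x hx ↦ ?_)
    (integrable_betaProfile_norm hβ).integrableOn
  rw [betaProfile_of_le_one (hnorm hx)]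
  have := h x hx
  gcongr

lemma betaMeasure_real_le_mul_volume_real (hβ : 0 ≤ β) {t : ℝ} {A : Set ℝ²}
    (hA : MeasurableSet A) (h : ∀ x ∈ A, ‖x‖ ≤ 1 → 1 - ‖x‖ ^ 2 ≤ t) :
    (betaMeasure β).real A ≤
      (β + 1) / Real.pi * t ^ β * volume.real (A ∩ Metric.closedBall 0 1) := by
  have hfinite : volume (A ∩ Metric.closedBall (0 : ℝ²) 1) < ⊤ :=
    (measure_mono Set.inter_subset_right).trans_lt measure_closedBall_lt_top
  rw [betaMeasure_real_apply hβ hA,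
    setIntegral_eq_of_subset_of_forall_sdiff_eq_zero hA Set.inter_subset_left fun x hx ↦
      betaProfile_of_one_lt (not_le.1 fun hx₁ ↦ hx.2 ⟨hx.1, mem_closedBall_zero_iff.2 hx₁⟩)]
  refine (Real.le_norm_self _).trans (norm_setIntegral_le_of_norm_le_const hfinite fun x hx ↦ ?_)
  have hx₁ : ‖x‖ ≤ 1 := mem_closedBall_zero_iff.1 hx.2
  have hx₂ : 0 ≤ 1 - ‖x‖ ^ 2 := by nlinarith [norm_nonneg x]
  rw [Real.norm_of_nonneg (betaProfile_nonneg hβ (norm_nonneg x)), betaProfile_of_le_one hx₁]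
  have := h x hx.1 hx₁
  gcongr

end BetaMeasure

section CapChart

variable (b : OrthonormalBasis (Fin 2) ℝ ℝ²) (w : ℝ)

/-- The affine coordinates on the cap of the unit disk around `b 1` in which the width `w` and the
depth `w ^ 2` become `1`; the unit circle is close to the parabola `u ^ 2 = 2 * v` in them. -/
noncomputable def capChart : ℝ² →ᵃ[ℝ] ℝ × ℝ :=
  ((w⁻¹ • innerₛₗ ℝ (b 0)).prod (-(w ^ 2)⁻¹ • innerₛₗ ℝ (b 1))).toAffineMap +
    AffineMap.const ℝ ℝ² (0, (w ^ 2)⁻¹)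

lemma capChart_apply (q : ℝ²) :
    capChart b w q = (inner ℝ (b 0) q / w, (1 - inner ℝ (b 1) q) / w ^ 2) := by
  ext <;> simp [capChart] <;> ring

lemma measurable_capChart : Measurable (capChart b w) :=
  (capChart b w).continuous_of_finiteDimensional.measurable

variable {w}

lemma one_sub_sq_norm_eq_capChart (hw : w ≠ 0) (q : ℝ²) :
    1 - ‖q‖ ^ 2 = w ^ 2 * (2 * (capChart b w q).2 - (capChart b w q).1 ^ 2 -
      w ^ 2 * (capChart b w q).2 ^ 2) := by
  rw [← b.sum_sq_inner_right q, Fin.sum_univ_two, capChart_apply]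
  field_simp
  ring

lemma capChart_injective (hw : w ≠ 0) : Function.Injective (capChart b w) := by
  intro q q' h
  simp only [capChart_apply, Prod.mk.injEq] at h
  refine b.repr.injective (PiLp.ext (Fin.forall_fin_two.2 ⟨?_, ?_⟩)) <;>
    simp only [b.repr_apply_apply]
  · exact (div_left_inj' hw).1 h.1
  · exact sub_right_injective ((div_left_inj' (pow_ne_zero 2 hw)).1 h.2)

lemma sq_capChart_fst_le (hw : w ≠ 0) {q : ℝ²} (hq : ‖q‖ ≤ 1) :
    (capChart b w q).1 ^ 2 ≤ 2 * (capChart b w q).2 := by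
  have hnonneg : 0 ≤ 1 - ‖q‖ ^ 2 := by nlinarith [norm_nonneg q]
  rw [one_sub_sq_norm_eq_capChart b hw] at hnonneg
  have := nonneg_of_mul_nonneg_right hnonneg (by positivity)
  nlinarith [sq_nonneg (w * (capChart b w q).2)]

lemma volume_real_capChart_preimage (hw : 0 < w) {u₁ u₂ v₁ v₂ : ℝ} (hu : u₁ ≤ u₂)
    (hv : v₁ ≤ v₂) :
    volume.real (capChart b w ⁻¹' (Set.Icc u₁ u₂ ×ˢ Set.Icc v₁ v₂)) =
      (u₂ - u₁) * (v₂ - v₁) * w ^ 3 := by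
  have hcoords : MeasurePreserving (fun q : ℝ² ↦ (b.repr q).ofLp) volume volume :=
    (PiLp.volume_preserving_ofLp (Fin 2)).comp b.measurePreserving_repr
  have hpreimage : capChart b w ⁻¹' (Set.Icc u₁ u₂ ×ˢ Set.Icc v₁ v₂) =
      (fun q : ℝ² ↦ (b.repr q).ofLp) ⁻¹'
        Set.Icc ![w * u₁, 1 - w ^ 2 * v₂] ![w * u₂, 1 - w ^ 2 * v₁] := by
    ext q
    simp only [capChart_apply, Set.mem_preimage, Set.mem_prod, Set.mem_Icc, Pi.le_def,
      Fin.forall_fin_two, b.repr_apply_apply, Matrix.cons_val_zero, Matrix.cons_val_one,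
      le_div_iff₀ hw, div_le_iff₀ hw, le_div_iff₀ (pow_pos hw 2), div_le_iff₀ (pow_pos hw 2),
      sub_le_comm (a := (1 : ℝ)), le_sub_comm (b := (1 : ℝ)), mul_comm w, mul_comm (w ^ 2)]
    tauto
  have hle : ![w * u₁, 1 - w ^ 2 * v₂] ≤ ![w * u₂, 1 - w ^ 2 * v₁] := by
    rw [Pi.le_def, Fin.forall_fin_two]
    simp only [Matrix.cons_val_zero, Matrix.cons_val_one]
    constructor <;> gcongr
  rw [hpreimage, hcoords.measureReal_preimage measurableSet_Icc.nullMeasurableSet, measureReal_def,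
    Real.volume_Icc_pi_toReal hle, Fin.prod_univ_two]
  simp only [Matrix.cons_val_zero, Matrix.cons_val_one]
  ring

lemma norm_sub_lt_of_capChart_le (hw : 0 < w) {q : ℝ²} (hq : ‖q‖ ≤ 1)
    (h : (capChart b w q).2 ≤ 100) : ‖q - b 1‖ < 15 * w := by
  rw [capChart_apply, div_le_iff₀ (by positivity)] at h
  have hsq : ‖q - b 1‖ ^ 2 = ‖q‖ ^ 2 - 2 * inner ℝ (b 1) q + 1 := by
    rw [norm_sub_sq_real, b.norm_eq_one, real_inner_comm, one_pow]
  refine lt_of_pow_lt_pow_left₀ 2 (by positivity) ?_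
  nlinarith [norm_nonneg q, pow_pos hw 2]

lemma capChart_mem_farRegion_of_sep (b' : OrthonormalBasis (Fin 2) ℝ ℝ²) (hw : 0 < w)
    (hsep : 30 * w ≤ ‖b 1 - b' 1‖) {q : ℝ²} (hq : ‖q‖ ≤ 1) (h : (capChart b w q).2 ≤ 100) :
    capChart b' w q ∈ farRegion := by
  refine ⟨sq_capChart_fst_le b' hw.ne' hq, not_le.1 fun h' ↦ ?_⟩
  have htriangle := norm_sub_le_norm_sub_add_norm_sub (b 1) q (b' 1)
  rw [norm_sub_rev (b 1) q] at htriangle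
  linarith [norm_sub_lt_of_capChart_le b hw hq h, norm_sub_lt_of_capChart_le b' hw hq h']

lemma le_of_mem_cellRegion (hw : 0 < w) (hw' : w ≤ 1 / 30) {p : ℝ × ℝ} (hp : p ∈ cellRegion) :
    1 / 20 ≤ 2 * p.2 - p.1 ^ 2 - w ^ 2 * p.2 ^ 2 := by
  have hw₂ : w ^ 2 ≤ 1 / 900 := by nlinarith
  obtain (⟨⟨hu, hu'⟩, hv, hv'⟩ | ⟨⟨hu, hu'⟩, hv, hv'⟩) | ⟨⟨hu, hu'⟩, hv, hv'⟩ := hp <;>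
  · norm_num at hu hu' hv hv'
    have : w ^ 2 * p.2 ^ 2 ≤ 1 / 900 * p.2 ^ 2 := by gcongr
    nlinarith

lemma sq_mul_le_one_sub_sq_norm (hw : 0 < w) (hw' : w ≤ 1 / 30) {q : ℝ²}
    (hq : capChart b w q ∈ cellRegion) : w ^ 2 * (1 / 20) ≤ 1 - ‖q‖ ^ 2 := by
  rw [one_sub_sq_norm_eq_capChart b hw.ne']
  exact mul_le_mul_of_nonneg_left (le_of_mem_cellRegion hw hw' hq) (sq_nonneg w)

lemma norm_le_one_of_capChart_mem_cellRegion (hw : 0 < w) (hw' : w ≤ 1 / 30) {q : ℝ²}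
    (hq : capChart b w q ∈ cellRegion) : ‖q‖ ≤ 1 := by
  nlinarith [sq_mul_le_one_sub_sq_norm b hw hw' hq, norm_nonneg q, sq_nonneg w]

variable {β : ℝ}

lemma sq_mul_rpow_mul_pow_three (hw : 0 < w) {t : ℝ} (ht : 0 ≤ t) :
    (w ^ 2 * t) ^ β * w ^ 3 = t ^ β * w ^ (2 * β + 3) := by
  rw [Real.mul_rpow (by positivity) ht, ← Real.rpow_natCast_mul hw.le, Real.rpow_add hw]
  norm_cast
  ring

lemma mul_rpow_le_betaMeasure_real_capChart_preimage (hβ : 0 ≤ β) (hw : 0 < w) (hw' : w ≤ 1 / 30)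
    {u₁ u₂ v₁ v₂ : ℝ} (hu : u₁ ≤ u₂) (hv : v₁ ≤ v₂)
    (hsub : Set.Icc u₁ u₂ ×ˢ Set.Icc v₁ v₂ ⊆ cellRegion) :
    (β + 1) / Real.pi * (1 / 20) ^ β * ((u₂ - u₁) * (v₂ - v₁)) * w ^ (2 * β + 3) ≤
      (betaMeasure β).real (capChart b w ⁻¹' (Set.Icc u₁ u₂ ×ˢ Set.Icc v₁ v₂)) := by
  refine le_of_eq_of_le ?_ (mul_volume_real_le_betaMeasure_real hβ (t := w ^ 2 * (1 / 20))
    (by positivity) (measurable_capChart b w (measurableSet_Icc.prod measurableSet_Icc))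
    fun q hq ↦ sq_mul_le_one_sub_sq_norm b hw hw' (hsub hq))
  rw [volume_real_capChart_preimage b hw hu hv]
  linear_combination -((β + 1) / Real.pi * ((u₂ - u₁) * (v₂ - v₁))) *
    sq_mul_rpow_mul_pow_three (β := β) hw (t := 1 / 20) (by norm_num)

lemma betaMeasure_real_capChart_preimage_compl_farRegion_le (hβ : 0 ≤ β) (hw : 0 < w) :
    (betaMeasure β).real (capChart b w ⁻¹' farRegion)ᶜ ≤
      (β + 1) / Real.pi * 200 ^ β * 3000 * w ^ (2 * β + 3) := by
  have hmeas : MeasurableSet (capChart b w ⁻¹' farRegion)ᶜ :=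
    (measurable_capChart b w measurableSet_farRegion).compl
  have hdepth {q : ℝ²} (hq : q ∈ (capChart b w ⁻¹' farRegion)ᶜ) (hq₁ : ‖q‖ ≤ 1) :
      (capChart b w q).2 ≤ 100 :=
    not_lt.1 fun h ↦ hq ⟨sq_capChart_fst_le b hw.ne' hq₁, h⟩
  have hbox : (capChart b w ⁻¹' farRegion)ᶜ ∩ Metric.closedBall 0 1 ⊆
      capChart b w ⁻¹' (Set.Icc (-15) 15 ×ˢ Set.Icc 0 100) := by
    rintro q ⟨hq, hq₁⟩
    rw [mem_closedBall_zero_iff] at hq₁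
    have hsq := sq_capChart_fst_le b hw.ne' hq₁
    have hv := hdepth hq hq₁
    exact ⟨⟨by nlinarith, by nlinarith⟩, by nlinarith, hv⟩
  have hbox_volume := volume_real_capChart_preimage b hw (u₁ := -15) (u₂ := 15) (v₁ := 0)
    (v₂ := 100) (by norm_num) (by norm_num)
  have hbox_pos : 0 < volume.real (capChart b w ⁻¹' (Set.Icc (-15) 15 ×ˢ Set.Icc 0 100)) := by
    rw [hbox_volume]
    positivity
  have hvolume := measureReal_mono hbox (ENNReal.toReal_pos_iff.1 hbox_pos).2.ne
  rw [hbox_volume] at hvolume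
  have hupper := betaMeasure_real_le_mul_volume_real hβ (t := w ^ 2 * 200) hmeas fun q hq hq₁ ↦ by
    rw [one_sub_sq_norm_eq_capChart b hw.ne']
    have := hdepth hq hq₁
    gcongr
    nlinarith [sq_nonneg (capChart b w q).1, sq_nonneg (w * (capChart b w q).2)]
  refine hupper.trans ((mul_le_mul_of_nonneg_left hvolume (by positivity)).trans_eq ?_)
  linear_combination (β + 1) / Real.pi * 3000 *
    sq_mul_rpow_mul_pow_three (β := β) hw (t := 200) (by norm_num)

end CapChart

section SeparatedCaps

lemma exists_orthonormalBasis_apply_one_eq {x : ℝ²} (hx : ‖x‖ = 1) :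
    ∃ b : OrthonormalBasis (Fin 2) ℝ ℝ², b 1 = x := by
  have horthonormal : Orthonormal ℝ (({1} : Set (Fin 2)).domRestrict fun _ ↦ x) :=
    ⟨fun _ ↦ hx, fun i j hij ↦ (hij (Subsingleton.elim i j)).elim⟩
  obtain ⟨b, hb⟩ := horthonormal.exists_orthonormalBasis_extension_of_card_eq (by simp)
  exact ⟨b, hb 1 rfl⟩

lemma exists_norm_eq_one_pairwise_le_norm_sub {m : ℕ} {δ : ℝ} (hδ : 0 ≤ δ) (hm : m * δ ≤ 1) :
    ∃ x : Fin m → ℝ², (∀ i, ‖x i‖ = 1) ∧ Pairwise fun i j ↦ δ ≤ ‖x i - x j‖ := by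
  refine ⟨fun i ↦ !₂[i * δ, √(1 - (i * δ) ^ 2)], fun i ↦ ?_, fun i j hij ↦ ?_⟩
  · have hi : (i : ℝ) * δ ≤ 1 := le_trans (by gcongr; exact i.2.le) hm
    have hi₀ : 0 ≤ 1 - (i * δ) ^ 2 := sub_nonneg.2 (pow_le_one₀ (by positivity) hi)
    simp [EuclideanSpace.norm_eq, Real.sq_sqrt hi₀]
  · have hdist : (1 : ℝ) ≤ |(i : ℝ) - j| := by
      exact_mod_cast Int.one_le_abs
        (sub_ne_zero.2 (Nat.cast_injective.ne (Fin.val_injective.ne hij)))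
    refine le_trans ?_ (PiLp.norm_apply_le _ 0)
    simpa [← sub_mul, abs_mul, abs_of_nonneg hδ] using le_mul_of_one_le_left hδ hdist

lemma exists_orthonormalBasis_pairwise_le_norm_sub {m : ℕ} {δ : ℝ} (hδ : 0 ≤ δ)
    (hm : m * δ ≤ 1) :
    ∃ b : Fin m → OrthonormalBasis (Fin 2) ℝ ℝ², Pairwise fun i j ↦ δ ≤ ‖b i 1 - b j 1‖ := by
  obtain ⟨x, hx, hsep⟩ := exists_norm_eq_one_pairwise_le_norm_sub hδ hm
  choose b hb using fun i ↦ exists_orthonormalBasis_apply_one_eq (hx i)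
  exact ⟨b, fun i j hij ↦ by simpa only [hb] using hsep hij⟩

end SeparatedCaps

section PiecewiseFlip

variable {α : Type*} {F G : α → α} {X Y Z : Set α} [DecidablePred (· ∈ Z)]
  [DecidablePred (· ∈ Y)]

lemma piecewise_id_mem_iff (hF : ∀ x, F x ∈ Z ↔ x ∈ Z) (hX : Disjoint X Z ∨ Z ⊆ X) (x : α) :
    Z.piecewise F id x ∈ X ↔ x ∈ X := by
  by_cases hx : x ∈ Z
  · rw [Set.piecewise_eq_of_mem _ _ _ hx]
    obtain hX | hX := hX
    · exact iff_of_false (hX.notMem_of_mem_right ((hF x).2 hx)) (hX.notMem_of_mem_right hx)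
    · exact iff_of_true (hX ((hF x).2 hx)) (hX hx)
  · rw [Set.piecewise_eq_of_notMem _ _ _ hx, id]

lemma involutive_piecewise_id (hF : ∀ x, F x ∈ Z ↔ x ∈ Z) (hFF : Function.Involutive F) :
    Function.Involutive (Z.piecewise F id) := by
  intro x
  by_cases hx : x ∈ Z
  · rw [Set.piecewise_eq_of_mem _ _ _ hx, Set.piecewise_eq_of_mem _ _ _ ((hF x).2 hx), hFF]
  · rw [Set.piecewise_eq_of_notMem Z _ _ hx, id, Set.piecewise_eq_of_notMem Z _ _ hx, id]

lemma commute_piecewise_id (hF : ∀ x, F x ∈ Z ↔ x ∈ Z) (hG : ∀ x, G x ∈ Y ↔ x ∈ Y)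
    (hZY : Disjoint Z Y) : Function.Commute (Z.piecewise F id) (Y.piecewise G id) := by
  intro x
  by_cases hx : x ∈ Z
  · rw [Set.piecewise_eq_of_notMem Y _ _ (hZY.notMem_of_mem_left hx), id,
      Set.piecewise_eq_of_mem _ _ _ hx,
      Set.piecewise_eq_of_notMem Y _ _ (hZY.notMem_of_mem_left ((hF x).2 hx)), id]
  · rw [Set.piecewise_eq_of_notMem Z _ _ hx, id]
    by_cases hx' : x ∈ Y
    · rw [Set.piecewise_eq_of_mem _ _ _ hx',
        Set.piecewise_eq_of_notMem Z _ _ (hZY.notMem_of_mem_right ((hG x).2 hx')), id]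
    · rw [Set.piecewise_eq_of_notMem Y _ _ hx', id, Set.piecewise_eq_of_notMem Z _ _ hx, id]

lemma measurePreserving_piecewise_id [MeasurableSpace α] {μ : Measure α}
    (hF : ∀ x, F x ∈ Z ↔ x ∈ Z) (hZ : MeasurableSet Z) (hFμ : MeasurePreserving F μ μ) :
    MeasurePreserving (Z.piecewise F id) μ μ := by
  have hmeas : Measurable (Z.piecewise F id) := hFμ.measurable.piecewise hZ measurable_id
  refine ⟨hmeas, Measure.ext fun s hs ↦ ?_⟩
  have hinter : F ⁻¹' s ∩ Z = F ⁻¹' (s ∩ Z) := by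
    ext x
    simp only [Set.mem_inter_iff, Set.mem_preimage, hF]
  rw [Measure.map_apply hmeas hs, Set.piecewise_preimage, Set.preimage_id, Set.ite,
    measure_union (Set.disjoint_sdiff_right.mono_left Set.inter_subset_right) (hs.diff hZ), hinter,
    hFμ.measure_preimage (hs.inter hZ).nullMeasurableSet, measure_inter_add_sdiff _ hZ]

end PiecewiseFlip

section Occupancy

variable {α ι κ : Type*} {S : ι → Set α} {O : Set α}

/-- The configurations in which some injective labelling puts one point into each `S a` and all the
other points lie in `O`. -/
def occupancyEvent (S : ι → Set α) (O : Set α) : Set (κ → α) :=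
  ⋃ e : ι ↪ κ, Set.univ.pi (Function.extend e S fun _ ↦ O)

lemma mem_univ_pi_extend_iff (e : ι ↪ κ) {ω : κ → α} :
    ω ∈ Set.univ.pi (Function.extend e S fun _ ↦ O) ↔
      (∀ a, ω (e a) ∈ S a) ∧ ∀ j ∉ Set.range e, ω j ∈ O := by
  rw [Set.mem_univ_pi]
  refine ⟨fun h ↦ ⟨fun a ↦ ?_, fun j hj ↦ ?_⟩, fun h j ↦ ?_⟩
  · simpa only [e.injective.extend_apply] using h (e a)
  · simpa only [Function.extend_apply' _ _ _ hj] using h j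
  · by_cases hj : j ∈ Set.range e
    · obtain ⟨a, rfl⟩ := hj
      simpa only [e.injective.extend_apply] using h.1 a
    · simpa only [Function.extend_apply' _ _ _ hj] using h.2 j hj

lemma mem_occupancyEvent_iff {ω : κ → α} :
    ω ∈ occupancyEvent S O ↔
      ∃ e : ι ↪ κ, (∀ a, ω (e a) ∈ S a) ∧ ∀ j ∉ Set.range e, ω j ∈ O := by
  simp only [occupancyEvent, Set.mem_iUnion, mem_univ_pi_extend_iff]

lemma comp_mem_occupancyEvent_iff {F : α → α} (hS : ∀ a x, F x ∈ S a ↔ x ∈ S a)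
    (hO : ∀ x, F x ∈ O ↔ x ∈ O) {ω : κ → α} :
    (fun j ↦ F (ω j)) ∈ occupancyEvent S O ↔ ω ∈ occupancyEvent S O := by
  simp only [mem_occupancyEvent_iff, hS, hO]

lemma pairwise_disjoint_univ_pi_extend (hS : Pairwise (Function.onFun Disjoint S))
    (hSO : ∀ a, Disjoint (S a) O) :
    Pairwise (Function.onFun Disjoint
      fun e : ι ↪ κ ↦ Set.univ.pi (Function.extend e S fun _ ↦ O)) := by
  refine fun e e' hne ↦ Set.disjoint_left.2 fun ω hω hω' ↦ hne (DFunLike.ext _ _ fun a ↦ ?_)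
  rw [mem_univ_pi_extend_iff] at hω hω'
  obtain ⟨a', ha'⟩ : e a ∈ Set.range e' :=
    not_not.1 fun ha ↦ (hSO a).notMem_of_mem_left (hω.1 a) (hω'.2 _ ha)
  obtain rfl : a = a' := not_not.1 fun haa' ↦
    (hS haa').notMem_of_mem_left (hω.1 a) (ha' ▸ hω'.1 a')
  exact ha'.symm

variable [MeasurableSpace α]

lemma measurableSet_univ_pi_extend [Countable κ] (hS : ∀ a, MeasurableSet (S a))
    (hO : MeasurableSet O) (e : ι ↪ κ) :
    MeasurableSet (Set.univ.pi (Function.extend e S fun _ ↦ O)) := by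
  refine .univ_pi fun j ↦ ?_
  by_cases hj : j ∈ Set.range e
  · obtain ⟨a, rfl⟩ := hj
    rw [e.injective.extend_apply]
    exact hS a
  · rwa [Function.extend_apply' _ _ _ hj]

lemma measurableSet_occupancyEvent [Finite κ] (hS : ∀ a, MeasurableSet (S a))
    (hO : MeasurableSet O) :
    MeasurableSet (occupancyEvent S O : Set (κ → α)) :=
  .iUnion fun e ↦ measurableSet_univ_pi_extend hS hO e

variable [Fintype ι] [Fintype κ]

lemma measure_pi_univ_pi_extend (μ : Measure α) [SigmaFinite μ] (e : ι ↪ κ) :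
    Measure.pi (fun _ ↦ μ) (Set.univ.pi (Function.extend e S fun _ ↦ O)) =
      (∏ a, μ (S a)) * μ O ^ (Fintype.card κ - Fintype.card ι) := by
  classical
  have hcompl {j : κ} (hj : j ∈ (Finset.univ.map e)ᶜ) :
      μ (Function.extend e S (fun _ ↦ O) j) = μ O := by
    rw [Function.extend_apply' _ _ _ (by simpa using hj)]
  rw [Measure.pi_pi, ← Finset.prod_mul_prod_compl (Finset.univ.map e), Finset.prod_map,
    Finset.prod_congr rfl fun j hj ↦ hcompl hj, Finset.prod_const, Finset.card_compl,
    Finset.card_map, Finset.card_univ]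
  simp only [e.injective.extend_apply]

lemma measureReal_pi_occupancyEvent (μ : Measure α) [SigmaFinite μ]
    (hS : ∀ a, MeasurableSet (S a)) (hO : MeasurableSet O)
    (hdisj : Pairwise (Function.onFun Disjoint S)) (hSO : ∀ a, Disjoint (S a) O) :
    (Measure.pi fun _ : κ ↦ μ).real (occupancyEvent S O) =
      (Fintype.card κ).descFactorial (Fintype.card ι) *
        ((∏ a, μ.real (S a)) * μ.real O ^ (Fintype.card κ - Fintype.card ι)) := by
  classical
  rw [measureReal_def, occupancyEvent, measure_iUnion (pairwise_disjoint_univ_pi_extend hdisj hSO)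
    (measurableSet_univ_pi_extend hS hO), tsum_fintype]
  simp only [measure_pi_univ_pi_extend, Finset.sum_const, Finset.card_univ,
    Fintype.card_embedding_eq, nsmul_eq_mul, ENNReal.toReal_mul, ENNReal.toReal_natCast,
    ENNReal.toReal_prod, ENNReal.toReal_pow, measureReal_def]

end Occupancy

section CapFlip

variable (b : OrthonormalBasis (Fin 2) ℝ ℝ²) (w : ℝ)

/-- The reflection in the axis spanned by `b 1`. -/
noncomputable def axisMirror : ℝ² ≃ₗᵢ[ℝ] ℝ² := (ℝ ∙ b 0)ᗮ.reflection

lemma capChart_axisMirror (q : ℝ²) :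
    capChart b w (axisMirror b q) = (-(capChart b w q).1, (capChart b w q).2) := by
  have h₀ : axisMirror b (b 0) = -b 0 :=
    Submodule.reflection_orthogonalComplement_singleton_eq_neg _
  have h₁ : axisMirror b (b 1) = b 1 := Submodule.reflection_mem_subspace_eq_self
    (Submodule.mem_orthogonal_singleton_iff_inner_right.2 (b.orthonormal.2 zero_ne_one))
  have hself (x : ℝ²) : inner ℝ x (axisMirror b q) = inner ℝ (axisMirror b x) q := by
    rw [← (axisMirror b).inner_map_map (axisMirror b x) q, axisMirror,
      Submodule.reflection_reflection]
  rw [capChart_apply, capChart_apply, hself, hself, h₀, h₁, inner_neg_left, neg_div]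

/-- The region of the disk in which `capFlip` moves points. -/
def flipZone : Set ℝ² := capChart b w ⁻¹' (awayCell ∪ coverCell)

lemma measurableSet_flipZone : MeasurableSet (flipZone b w) :=
  measurable_capChart b w ((measurableSet_Icc.prod measurableSet_Icc).union
    (measurableSet_Icc.prod measurableSet_Icc))

lemma axisMirror_mem_flipZone_iff (q : ℝ²) : axisMirror b q ∈ flipZone b w ↔ q ∈ flipZone b w := by
  have haway : (-(capChart b w q).1, (capChart b w q).2) ∈ awayCell ↔
      capChart b w q ∈ coverCell := by
    simpa using (mk_neg_mem_coverCell_iff (p := (-(capChart b w q).1, (capChart b w q).2))).symm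
  rw [flipZone, Set.mem_preimage, Set.mem_preimage, capChart_axisMirror, Set.mem_union,
    Set.mem_union, haway, mk_neg_mem_coverCell_iff, or_comm]

open Classical in
/-- The involution reflecting the cells `awayCell` and `coverCell` of the chart onto each other and
fixing all other points. -/
noncomputable def capFlip : ℝ² → ℝ² := (flipZone b w).piecewise (axisMirror b) id

lemma involutive_capFlip : Function.Involutive (capFlip b w) := by
  classical
  exact involutive_piecewise_id (axisMirror_mem_flipZone_iff b w)
    (Submodule.reflection_involutive _)

lemma measurePreserving_capFlip (β : ℝ) :
    MeasurePreserving (capFlip b w) (betaMeasure β) (betaMeasure β) := by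
  classical
  exact measurePreserving_piecewise_id (axisMirror_mem_flipZone_iff b w)
    (measurableSet_flipZone b w) (measurePreserving_betaMeasure _)

variable {b w}

lemma capChart_capFlip_mem_coverCell {q : ℝ²} (hq : capChart b w q ∈ awayCell) :
    capChart b w (capFlip b w q) ∈ coverCell := by
  classical
  rw [capFlip, Set.piecewise_eq_of_mem _ _ _ (show q ∈ flipZone b w from Or.inl hq),
    capChart_axisMirror]
  exact mk_neg_mem_coverCell_iff.2 hq

lemma capFlip_of_notMem {q : ℝ²} (hq : q ∉ flipZone b w) : capFlip b w q = q := by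
  classical
  exact Set.piecewise_eq_of_notMem _ _ _ hq

variable {b' : OrthonormalBasis (Fin 2) ℝ ℝ²} (hw : 0 < w) (hw' : w ≤ 1 / 30)
  (hsep : 30 * w ≤ ‖b 1 - b' 1‖)
include hw hw' hsep

lemma flipZone_subset_farRegion : flipZone b w ⊆ capChart b' w ⁻¹' farRegion := by
  intro q hq
  have hwindow : capChart b w q ∈ window :=
    Set.union_subset awayCell_subset_window coverCell_subset_window hq
  refine capChart_mem_farRegion_of_sep b b' hw hsep
    (norm_le_one_of_capChart_mem_cellRegion b hw hw' (Or.inr hwindow)) ?_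
  exact hwindow.2.2.trans (by norm_num)

lemma capFlip_mem_preimage_farRegion_iff (q : ℝ²) :
    capFlip b w q ∈ capChart b' w ⁻¹' farRegion ↔ q ∈ capChart b' w ⁻¹' farRegion := by
  classical
  exact piecewise_id_mem_iff (axisMirror_mem_flipZone_iff b w)
    (.inr (flipZone_subset_farRegion hw hw' hsep)) q

lemma capFlip_mem_preimage_iff {X : Set (ℝ × ℝ)} (hX : X ⊆ cellRegion) (q : ℝ²) :
    capFlip b w q ∈ capChart b' w ⁻¹' X ↔ q ∈ capChart b' w ⁻¹' X := by
  classical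
  exact piecewise_id_mem_iff (axisMirror_mem_flipZone_iff b w)
    (.inl ((disjoint_farRegion_cellRegion.symm.mono_left hX).preimage _ |>.mono_right
      (flipZone_subset_farRegion hw hw' hsep))) q

lemma commute_capFlip : Function.Commute (capFlip b w) (capFlip b' w) := by
  classical
  have hzone : awayCell ∪ coverCell ⊆ cellRegion :=
    (Set.union_subset awayCell_subset_window coverCell_subset_window).trans
      Set.subset_union_right
  exact commute_piecewise_id (axisMirror_mem_flipZone_iff b w) (axisMirror_mem_flipZone_iff b' w)
    ((disjoint_farRegion_cellRegion.mono_right hzone).preimage _ |>.mono_left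
      (flipZone_subset_farRegion hw hw' hsep))

end CapFlip

section VertCount

variable {n : ℕ}

lemma vertCount_eq_ncard (ω : Fin n → ℝ²) :
    vertCount ω = ((hullVertices (Set.range ω)).ncard : ℝ) :=
  rfl

lemma measurable_vertCount : Measurable (vertCount : (Fin n → ℝ²) → ℝ) := by
  simp only [funext vertCount_eq_ncard, ncard_hullVertices_range]
  exact Finset.measurable_fun_sum _ fun i _ ↦
    measurable_const.indicator (measurableSet_firstVertexEvent i)

lemma vertCount_nonneg (ω : Fin n → ℝ²) : 0 ≤ vertCount ω :=
  Nat.cast_nonneg _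

lemma vertCount_le (ω : Fin n → ℝ²) : vertCount ω ≤ n := by
  rw [vertCount_eq_ncard]
  have hrange : (Set.range ω).ncard ≤ n := by
    simpa using Set.ncard_image_le (f := ω) Set.finite_univ
  exact_mod_cast (Set.ncard_le_ncard (hullVertices_subset _) (Set.finite_range ω)).trans hrange

lemma memLp_vertCount (μ : Measure (Fin n → ℝ²)) [IsFiniteMeasure μ] : MemLp vertCount 2 μ :=
  .of_bound measurable_vertCount.aestronglyMeasurable n (.of_forall fun ω ↦ by
    rw [Real.norm_of_nonneg (vertCount_nonneg ω)]
    exact vertCount_le ω)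

variable {β : ℝ}

lemma isProbabilityMeasure_betaPi (hβ : 0 ≤ β) (n : ℕ) : IsProbabilityMeasure (betaPi β n) := by
  have := isProbabilityMeasure_betaMeasure hβ
  exact Measure.pi.instIsProbabilityMeasure _

lemma varF0_eq_variance (hβ : 0 ≤ β) (n : ℕ) :
    varF0 β n = ProbabilityTheory.variance vertCount (betaPi β n) := by
  have := isProbabilityMeasure_betaPi hβ n
  rw [ProbabilityTheory.variance_eq_sub (memLp_vertCount _)]
  rfl

end VertCount

section PivotalEvent

variable {n : ℕ} (b : OrthonormalBasis (Fin 2) ℝ ℝ²) (w : ℝ)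

/-- The configurations with one point in each cell of the chart and all the others far away: on
this event `capFlip` destroys exactly one hull vertex. -/
def pivotalEvent (n : ℕ) : Set (Fin n → ℝ²) :=
  occupancyEvent (fun a ↦ capChart b w ⁻¹' cell a) (capChart b w ⁻¹' farRegion)

lemma measurableSet_preimage_cell (a : Fin 4) : MeasurableSet (capChart b w ⁻¹' cell a) := by
  obtain ⟨_, _, _, _, -, -, -, ha⟩ := exists_cell_eq_Icc_prod a
  rw [ha]
  exact measurable_capChart b w (measurableSet_Icc.prod measurableSet_Icc)

lemma measurableSet_pivotalEvent : MeasurableSet (pivotalEvent b w n) :=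
  measurableSet_occupancyEvent (measurableSet_preimage_cell b w)
    (measurable_capChart b w measurableSet_farRegion)

lemma range_eq_union_of_embedding_fin_four {α κ : Type*} (ω : κ → α) (e : Fin 4 ↪ κ) :
    Set.range ω = ω '' (Set.range e)ᶜ ∪ {ω (e 0), ω (e 1)} ∪ {ω (e 2), ω (e 3)} := by
  have huniv : (Set.univ : Set (Fin 4)) = {0, 1} ∪ {2, 3} := by
    ext a
    fin_cases a <;> simp
  have hrange : ω '' Set.range e = {ω (e 0), ω (e 1)} ∪ {ω (e 2), ω (e 3)} := by
    rw [← Set.range_comp, ← Set.image_univ, huniv, Set.image_union, Set.image_pair, Set.image_pair]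
    rfl
  rw [Set.union_assoc, ← hrange, ← Set.image_union, Set.compl_union_self, Set.image_univ]

variable {b w}

lemma vertCount_eq_ncard_capChart (hw : w ≠ 0) (e : Fin 4 ↪ Fin n) (ω : Fin n → ℝ²) :
    vertCount ω = ((hullVertices ((fun j ↦ capChart b w (ω j)) '' (Set.range e)ᶜ ∪
      {capChart b w (ω (e 0)), capChart b w (ω (e 1))} ∪
      {capChart b w (ω (e 2)), capChart b w (ω (e 3))})).ncard : ℝ) := by
  rw [vertCount_eq_ncard, ← Set.ncard_image_of_injective _ (capChart_injective b hw),
    ← hullVertices_image _ (capChart_injective b hw), ← Set.range_comp,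
    range_eq_union_of_embedding_fin_four _ e]
  rfl

lemma vertCount_eq_vertCount_capFlip_add_one (hw : w ≠ 0) {ω : Fin n → ℝ²}
    (hω : ω ∈ pivotalEvent b w n) :
    vertCount ω = vertCount (fun j ↦ capFlip b w (ω j)) + 1 := by
  obtain ⟨e, hcell, hfar⟩ := mem_occupancyEvent_iff.1 hω
  have hfixed {q : ℝ²} (hq : capChart b w q ∈ farRegion ∪ leftCell ∪ rightCell ∪ hiddenCell) :
      capFlip b w q = q :=
    capFlip_of_notMem (disjoint_awayCell_union_coverCell.notMem_of_mem_left hq)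
  have hP : (fun j ↦ capChart b w (ω j)) '' (Set.range e)ᶜ ⊆ farRegion := by
    rintro _ ⟨j, hj, rfl⟩
    exact hfar j hj
  have hflipP : (fun j ↦ capChart b w (capFlip b w (ω j))) '' (Set.range e)ᶜ =
      (fun j ↦ capChart b w (ω j)) '' (Set.range e)ᶜ :=
    Set.image_congr fun j hj ↦ by rw [hfixed (.inl (.inl (.inl (hfar j hj))))]
  rw [vertCount_eq_ncard_capChart (b := b) hw e ω, vertCount_eq_ncard_capChart (b := b) hw e,
    hflipP, hfixed (.inl (.inl (.inr (hcell 0)))), hfixed (.inl (.inr (hcell 1))),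
    hfixed (.inr (hcell 2))]
  exact_mod_cast ncard_hullVertices_away_eq_cover_add_one ((Set.toFinite _).image _) hP (hcell 0)
    (hcell 1) (hcell 2) (hcell 3) (capChart_capFlip_mem_coverCell (hcell 3))

end PivotalEvent

section LowerBound

variable {β w : ℝ} {n : ℕ}

lemma measurePreserving_capFlip_comp (b : OrthonormalBasis (Fin 2) ℝ ℝ²) (w β : ℝ) (n : ℕ) :
    MeasurePreserving (fun (ω : Fin n → ℝ²) k ↦ capFlip b w (ω k)) (betaPi β n) (betaPi β n) :=
  measurePreserving_pi _ _ fun _ ↦ measurePreserving_capFlip b w β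

lemma half_mul_sum_pivotalEvent_le_varF0 (hβ : 0 ≤ β) (hw : 0 < w) (hw' : w ≤ 1 / 30) {m : ℕ}
    {b : Fin m → OrthonormalBasis (Fin 2) ℝ ℝ²}
    (hsep : Pairwise fun i j ↦ 30 * w ≤ ‖b i 1 - b j 1‖) (n : ℕ) :
    1 / 2 * ∑ i, (betaPi β n).real (pivotalEvent (b i) w n) ≤ varF0 β n := by
  have := isProbabilityMeasure_betaPi hβ n
  rw [varF0_eq_variance hβ]
  refine half_mul_sum_measureReal_le_variance (memLp_vertCount _)
    (fun i ↦ measurePreserving_capFlip_comp (b i) w β n) ?_ ?_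
    (fun i ↦ measurableSet_pivotalEvent (b i) w) ?_
    (fun i ω hω ↦ vertCount_eq_vertCount_capFlip_add_one hw.ne' hω)
  · exact fun i ω ↦ funext fun k ↦ involutive_capFlip (b i) w (ω k)
  · exact fun i j hij ω ↦ funext fun k ↦ commute_capFlip hw hw' (hsep hij) (ω k)
  · exact fun i j hij ↦ Set.ext fun ω ↦ comp_mem_occupancyEvent_iff
      (fun a ↦ capFlip_mem_preimage_iff hw hw' (hsep hij) (cell_subset_cellRegion a))
      (capFlip_mem_preimage_farRegion_iff hw hw' (hsep hij))

/-- A constant `c` such that every cell of the chart of width `w` has mass at least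
`c * w ^ (2 * β + 3)`. -/
noncomputable def cellMassConst (β : ℝ) : ℝ := (β + 1) / Real.pi * (1 / 20) ^ β * (1 / 200)

/-- A constant `C` such that the complement of `farRegion` in the chart of width `w` has mass at
most `C * w ^ (2 * β + 3)`. -/
noncomputable def capMassConst (β : ℝ) : ℝ := (β + 1) / Real.pi * 200 ^ β * 3000

lemma cellMassConst_pos (hβ : 0 ≤ β) : 0 < cellMassConst β := by
  unfold cellMassConst
  positivity

lemma capMassConst_pos (hβ : 0 ≤ β) : 0 < capMassConst β := by
  unfold capMassConst
  positivity

variable (b : OrthonormalBasis (Fin 2) ℝ ℝ²)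

lemma cellMassConst_mul_rpow_le (hβ : 0 ≤ β) (hw : 0 < w) (hw' : w ≤ 1 / 30) (a : Fin 4) :
    cellMassConst β * w ^ (2 * β + 3) ≤ (betaMeasure β).real (capChart b w ⁻¹' cell a) := by
  obtain ⟨u₁, u₂, v₁, v₂, hu, hv, harea, ha⟩ := exists_cell_eq_Icc_prod a
  have hsub := cell_subset_cellRegion a
  rw [ha] at hsub ⊢
  refine le_trans ?_ (mul_rpow_le_betaMeasure_real_capChart_preimage b hβ hw hw' hu hv hsub)
  unfold cellMassConst
  gcongr

lemma one_sub_capMassConst_mul_rpow_le (hβ : 0 ≤ β) (hw : 0 < w) :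
    1 - capMassConst β * w ^ (2 * β + 3) ≤ (betaMeasure β).real (capChart b w ⁻¹' farRegion) := by
  have := isProbabilityMeasure_betaMeasure hβ
  have hcompl := betaMeasure_real_capChart_preimage_compl_farRegion_le b hβ hw
  rw [probReal_compl_eq_one_sub (measurable_capChart b w measurableSet_farRegion)] at hcompl
  unfold capMassConst
  linarith

lemma mul_le_betaPi_real_pivotalEvent (hβ : 0 ≤ β) (hw : 0 < w) (hw' : w ≤ 1 / 30)
    (hcap : capMassConst β * w ^ (2 * β + 3) ≤ 1) (n : ℕ) :
    n.descFactorial 4 * ((cellMassConst β * w ^ (2 * β + 3)) ^ 4 *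
      (1 - capMassConst β * w ^ (2 * β + 3)) ^ (n - 4)) ≤
      (betaPi β n).real (pivotalEvent b w n) := by
  have hcell : 0 ≤ cellMassConst β * w ^ (2 * β + 3) :=
    mul_nonneg (cellMassConst_pos hβ).le (by positivity)
  have hprod : (cellMassConst β * w ^ (2 * β + 3)) ^ 4 ≤
      ∏ a, (betaMeasure β).real (capChart b w ⁻¹' cell a) := by
    simpa using Finset.prod_le_prod (fun _ _ ↦ hcell)
      fun a (_ : a ∈ Finset.univ) ↦ cellMassConst_mul_rpow_le b hβ hw hw' a
  rw [betaPi, pivotalEvent, measureReal_pi_occupancyEvent _ (measurableSet_preimage_cell b w)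
    (measurable_capChart b w measurableSet_farRegion)
    (fun a a' ha ↦ (pairwise_disjoint_cell ha).preimage _)
    (fun a ↦ (disjoint_farRegion_cellRegion.symm.mono_left (cell_subset_cellRegion a)).preimage _),
    Fintype.card_fin, Fintype.card_fin]
  have hfar := one_sub_capMassConst_mul_rpow_le b hβ hw
  exact mul_le_mul_of_nonneg_left (mul_le_mul hprod (pow_le_pow_left₀ (sub_nonneg.2 hcap) hfar _)
    (pow_nonneg (sub_nonneg.2 hcap) _) (Finset.prod_nonneg fun _ _ ↦ measureReal_nonneg))
    (Nat.cast_nonneg _)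

/-- A lower bound for the probability of a pivotal event whose chart has the width at which about
one of the `n` points is expected outside `farRegion`. -/
noncomputable def pivotalProb (β : ℝ) : ℝ := (cellMassConst β / (4 * capMassConst β)) ^ 4 / 2

lemma pivotalProb_pos (hβ : 0 ≤ β) : 0 < pivotalProb β := by
  have := cellMassConst_pos hβ
  have := capMassConst_pos hβ
  unfold pivotalProb
  positivity

lemma half_pow_le_descFactorial_four (hn : 6 ≤ n) : ((n : ℝ) / 2) ^ 4 ≤ n.descFactorial 4 := by
  have hhalf : (n : ℝ) / 2 ≤ (n + 1 - 4 : ℕ) := by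
    rw [div_le_iff₀ two_pos]
    norm_cast
    lia
  calc ((n : ℝ) / 2) ^ 4 ≤ ((n + 1 - 4 : ℕ) : ℝ) ^ 4 := by gcongr
    _ ≤ (n.descFactorial 4 : ℝ) := by exact_mod_cast Nat.pow_sub_le_descFactorial n 4

lemma half_le_one_sub_one_div_pow (hn : n ≠ 0) (k : ℕ) :
    1 / 2 ≤ (1 - 1 / (2 * n) : ℝ) ^ (n - k) := by
  have hn₁ : (1 : ℝ) ≤ n := by exact_mod_cast Nat.one_le_iff_ne_zero.2 hn
  have hfrac : 1 / (2 * (n : ℝ)) ≤ 1 / 2 := by gcongr; linarith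
  calc (1 / 2 : ℝ) = 1 + n * -(1 / (2 * n)) := by field_simp; norm_num
    _ ≤ (1 + -(1 / (2 * n))) ^ n := one_add_mul_le_pow (by linarith) n
    _ = (1 - 1 / (2 * n)) ^ n := by rw [← sub_eq_add_neg]
    _ ≤ (1 - 1 / (2 * n)) ^ (n - k) :=
      pow_le_pow_of_le_one (by linarith) (sub_le_self _ (by positivity)) (Nat.sub_le n k)

lemma pivotalProb_le_betaPi_real_pivotalEvent (hβ : 0 ≤ β) (hw : 0 < w) (hw' : w ≤ 1 / 30)
    (hn : 6 ≤ n) (hwn : w ^ (2 * β + 3) = 1 / (2 * capMassConst β * n)) :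
    pivotalProb β ≤ (betaPi β n).real (pivotalEvent b w n) := by
  have hC := capMassConst_pos hβ
  have : (0 : ℝ) < n := by exact_mod_cast (by lia : 0 < n)
  have hcap : capMassConst β * w ^ (2 * β + 3) = 1 / (2 * n) := by
    rw [hwn]
    field_simp
  have hhalf := half_le_one_sub_one_div_pow (by lia : n ≠ 0) 4
  refine le_trans ?_ (mul_le_betaPi_real_pivotalEvent b hβ hw hw' ?_ n)
  · calc pivotalProb β
        = (n / 2) ^ 4 * ((cellMassConst β * w ^ (2 * β + 3)) ^ 4 * (1 / 2)) := by
          rw [pivotalProb, hwn]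
          field_simp
          norm_num
      _ ≤ _ := by
          rw [hcap]
          have := half_pow_le_descFactorial_four hn
          gcongr
  · rw [hcap, div_le_one (by positivity)]
    exact_mod_cast (by lia : 1 ≤ 2 * n)

lemma pivotalProb_mul_inv_le_varF0 (hβ : 0 ≤ β) (hw : 0 < w) (hw' : w ≤ 1 / 30) (hn : 6 ≤ n)
    (hwn : w ^ (2 * β + 3) = 1 / (2 * capMassConst β * n)) :
    pivotalProb β / 120 * w⁻¹ ≤ varF0 β n := by
  have hinv : 1 ≤ (30 * w)⁻¹ := (one_le_inv₀ (by positivity)).2 (by linarith)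
  have hfloor : w⁻¹ / 60 ≤ ⌊(30 * w)⁻¹⌋₊ := by
    have hone : (1 : ℝ) ≤ ⌊(30 * w)⁻¹⌋₊ := by exact_mod_cast Nat.floor_pos.2 hinv
    have hlt := Nat.lt_floor_add_one (30 * w)⁻¹
    rw [mul_inv] at hlt hone ⊢
    linarith
  obtain ⟨b, hb⟩ := exists_orthonormalBasis_pairwise_le_norm_sub (m := ⌊(30 * w)⁻¹⌋₊)
    (δ := 30 * w) (by positivity)
    ((le_div_iff₀ (by positivity)).1 ((Nat.floor_le (by positivity)).trans_eq (one_div _).symm))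
  have := pivotalProb_pos hβ
  calc pivotalProb β / 120 * w⁻¹ = 1 / 2 * (w⁻¹ / 60 * pivotalProb β) := by ring
    _ ≤ 1 / 2 * (⌊(30 * w)⁻¹⌋₊ * pivotalProb β) := by gcongr
    _ = 1 / 2 * ∑ _i : Fin ⌊(30 * w)⁻¹⌋₊, pivotalProb β := by simp
    _ ≤ 1 / 2 * ∑ i, (betaPi β n).real (pivotalEvent (b i) w n) := by
      gcongr with i
      exact pivotalProb_le_betaPi_real_pivotalEvent (b i) hβ hw hw' hn hwn
    _ ≤ varF0 β n := half_mul_sum_pivotalEvent_le_varF0 hβ hw hw' hb n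

end LowerBound

theorem variance_vertex_count_lower_general {β : ℝ} (hβ : 0 ≤ β) :
    ∃ c : ℝ, 0 < c ∧ ∃ N : ℕ, ∀ n : ℕ, N ≤ n → c * (n : ℝ) ^ (1 / (2 * β + 3)) ≤ varF0 β n := by
  have hC := capMassConst_pos hβ
  have hs : 0 < 2 * β + 3 := by linarith
  have hgrowth : Filter.Tendsto (fun n : ℕ ↦ (2 * capMassConst β * n) ^ (1 / (2 * β + 3)))
      Filter.atTop Filter.atTop :=
    (tendsto_rpow_atTop (one_div_pos.2 hs)).comp
      (tendsto_natCast_atTop_atTop.const_mul_atTop (by positivity))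
  refine ⟨pivotalProb β / 120 * (2 * capMassConst β) ^ (1 / (2 * β + 3)),
    mul_pos (div_pos (pivotalProb_pos hβ) (by norm_num)) (by positivity), ?_⟩
  refine Filter.eventually_atTop.1 ?_
  filter_upwards [hgrowth.eventually_ge_atTop 30, Filter.eventually_ge_atTop 6] with n hn₃₀ hn
  rw [mul_assoc, ← Real.mul_rpow (by positivity) (by positivity)]
  set x := 2 * capMassConst β * n
  have hwn : ((x ^ (1 / (2 * β + 3)))⁻¹) ^ (2 * β + 3) = 1 / x := by
    rw [Real.inv_rpow (by positivity), ← Real.rpow_mul (by positivity),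
      one_div_mul_cancel hs.ne', Real.rpow_one, one_div]
  simpa only [inv_inv] using pivotalProb_mul_inv_le_varF0 hβ (inv_pos.2 (by linarith))
    ((inv_le_comm₀ (by linarith) (by norm_num)).2 (by linarith)) hn hwn

/-- lower bound for the variance of the vertex count. For `d ≥ 4` and
`β = d/2 - 2`, for every `a > 0` there are `c > 0` and `N` such that
`Var(f₀(Qₙ)) ≥ c·n^{1/(d-1) - a}` for all `n ≥ N`. -/
theorem variance_vertex_count_lower (d : ℕ) (hd : 4 ≤ d)
    (β : ℝ) (hβ : β = (d : ℝ) / 2 - 2) :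
    ∀ a : ℝ, 0 < a → ∃ c : ℝ, 0 < c ∧ ∃ N : ℕ, ∀ n : ℕ, N ≤ n →
      c * (n : ℝ) ^ (1 / ((d : ℝ) - 1) - a) ≤ varF0 β n := by
  intro a ha
  have hd' : (4 : ℝ) ≤ d := by exact_mod_cast hd
  obtain ⟨c, hc, N, hN⟩ := variance_vertex_count_lower_general (β := β) (by linarith)
  refine ⟨c, hc, max N 1, fun n hn ↦ le_trans ?_ (hN n (le_of_max_le_left hn))⟩
  have hn₁ : (1 : ℝ) ≤ n := by exact_mod_cast le_of_max_le_right hn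
  rw [show 2 * β + 3 = (d : ℝ) - 1 by rw [hβ]; ring]
  gcongr
  exact sub_le_self _ ha.le
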